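/- arXiv:1702.07701 — 2 statements merged into one kernel-verified Lean document; each statement's English description precedes it below -/
import Mathlib

section
/- Let k be a division ring, f : k^n → k^n injective taking every left or right affine subspace to a left or right affine subspace. Then f maps every two-sided affine subspace onto a two-sided affine subspace, and maps every purely left or purely right affine subspace onto a purely left or purely right affine subspace. -/
open Function Set

variable {k : Type*}

/-- A set is a left `k`-subspace of `k^n`. -/
def IsLeftSub [DivisionRing k] {n : ℕ} (A : Set (Fin n → k)) : Prop :=
  ∃ S : Submodule k (Fin n → k), A = (S : Set (Fin n → k))

/-- A set is a right `k`-subspace of `k^n` (right modules encoded via `kᵐᵒᵖ`). -/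
def IsRightSub [DivisionRing k] {n : ℕ} (A : Set (Fin n → k)) : Prop :=
  ∃ S : Submodule kᵐᵒᵖ (Fin n → k), A = (S : Set (Fin n → k))

/-- A set is a left affine subspace of `k^n`: a translate of a left subspace. -/
def IsLeftAff [DivisionRing k] {n : ℕ} (A : Set (Fin n → k)) : Prop :=
  ∃ (v : Fin n → k) (S : Submodule k (Fin n → k)), A = (v + ·) '' (S : Set (Fin n → k))

/-- A set is a right affine subspace of `k^n`: a translate of a right subspace. -/
def IsRightAff [DivisionRing k] {n : ℕ} (A : Set (Fin n → k)) : Prop :=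
  ∃ (v : Fin n → k) (S : Submodule kᵐᵒᵖ (Fin n → k)), A = (v + ·) '' (S : Set (Fin n → k))

/-- `A` is a left affine subspace of dimension `d`. -/
def HasDimL [DivisionRing k] {n : ℕ} (A : Set (Fin n → k)) (d : ℕ) : Prop :=
  ∃ (v : Fin n → k) (S : Submodule k (Fin n → k)),
    A = (v + ·) '' (S : Set (Fin n → k)) ∧ Module.finrank k S = d

/-- `A` is a right affine subspace of dimension `d`. -/
def HasDimR [DivisionRing k] {n : ℕ} (A : Set (Fin n → k)) (d : ℕ) : Prop :=
  ∃ (v : Fin n → k) (S : Submodule kᵐᵒᵖ (Fin n → k)),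
    A = (v + ·) '' (S : Set (Fin n → k)) ∧ Module.finrank kᵐᵒᵖ S = d


/-!
Coordinates alone define a dimension for left and right affine subspaces of `k^ι`: the least number
of coordinates that separate the points. Comparing chains of subspaces, an injective `f` as in the
theorem does not raise it and is onto, so it maps the line through `p`, `q` on either side onto a
line through `f p`, `f q` on some side. If the left and right lines differ, so do their images, and
hence both lines through `f p`, `f q` are images of lines through `p`, `q`.

The point is that this also holds when `q - p` is two-sided. If a line `r` through `f p`, `f q` is
not the image of the line `pq`, any two points of `f⁻¹ r` differ by a two-sided vector, `f⁻¹ r` is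
not collinear, and one function `φ` satisfies `(x - p) c = φ(c) (x - p)` for all `x ∈ f⁻¹ r`. For
non-commuting `b`, `c`, and independent differences `u`, `v` of such points, `y = p + b u + c v` is
joined to no point of `f⁻¹ r` in the two-sided plane `p + k u + k v` by a two-sided vector. So `f`
maps that plane onto the plane of `r` and `f y`, and maps every line through `y` in a two-sided
direction onto the parallel to `r`. There are two such lines, namely in the directions `u` and `v`,
contradicting injectivity.

Finally, a left or right affine subspace is two-sided exactly when it contains both lines through
any two of its points, and `f` carries this condition back and forth.
-/

open Module MulOpposite Submodule
open scoped Affine Finset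

namespace SidedAffine

section CoordRank

variable {ι E R : Type*}

/-- The coordinate rank of `A ⊆ E^ι`: the least number of coordinates that separate the points of
`A`. No scalars enter, so it compares left with right affine subspaces; on an affine subspace over
either side it is the dimension (`coordRank_eq_finrank_direction`). -/
noncomputable def coordRank (A : Set (ι → E)) : ℕ :=
  sInf {m | ∃ I : Finset ι, #I = m ∧ InjOn I.restrict A}

lemma coordRank_le_card {A : Set (ι → E)} {I : Finset ι} (hI : InjOn I.restrict A) :
    coordRank A ≤ #I :=
  Nat.sInf_le ⟨I, rfl, hI⟩

lemma exists_card_eq_coordRank [Finite ι] (A : Set (ι → E)) :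
    ∃ I : Finset ι, #I = coordRank A ∧ InjOn I.restrict A := by
  have := Fintype.ofFinite ι
  exact Nat.sInf_mem (s := {m | ∃ I : Finset ι, #I = m ∧ InjOn I.restrict A})
    ⟨_, Finset.univ, rfl, fun _ _ _ _ h => funext fun i => congrFun h ⟨i, Finset.mem_univ i⟩⟩

lemma coordRank_mono [Finite ι] {A B : Set (ι → E)} (h : A ⊆ B) : coordRank A ≤ coordRank B := by
  obtain ⟨I, hI, hinj⟩ := exists_card_eq_coordRank B
  exact hI ▸ coordRank_le_card (hinj.mono h)

lemma coordRank_le_natCard [Finite ι] (A : Set (ι → E)) : coordRank A ≤ Nat.card ι := by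
  have := Fintype.ofFinite ι
  obtain ⟨I, hI, -⟩ := exists_card_eq_coordRank A
  exact hI ▸ Nat.card_eq_fintype_card (α := ι) ▸ Finset.card_le_univ I

variable [DivisionRing R] [AddCommGroup E] [Module R E]

lemma exists_mem_direction_of_card_le_coordRank {S : AffineSubspace R (ι → E)} {I : Finset ι}
    (hI : InjOn I.restrict (S : Set (ι → E))) (hcard : #I ≤ coordRank (S : Set (ι → E)))
    {i : ι} (hi : i ∈ I) : ∃ v ∈ S.direction, v i ≠ 0 ∧ ∀ j ∈ I, j ≠ i → v j = 0 := by
  classical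
  have not_injOn : ¬ InjOn (I.erase i).restrict (S : Set (ι → E)) := fun h =>
    absurd (coordRank_le_card h) (by have := Finset.card_erase_lt_of_mem hi; lia)
  obtain ⟨x, hx, y, hy, hxy, hne⟩ := by simpa only [InjOn, not_forall] using not_injOn
  have agree : ∀ j ∈ I, j ≠ i → x j = y j := fun j hj hji =>
    congrFun hxy ⟨j, Finset.mem_erase.2 ⟨hji, hj⟩⟩
  refine ⟨x - y, S.vsub_mem_direction hx hy, fun h => hne (hI hx hy ?_), fun j hj hji =>
    sub_eq_zero.2 (agree j hj hji)⟩
  funext j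
  by_cases hji : (j : ι) = i
  · subst hji
    exact sub_eq_zero.1 h
  · exact agree j j.2 hji

lemma exists_mem_direction_forall_eq (hE : finrank R E = 1) {S : AffineSubspace R (ι → E)}
    {I : Finset ι} (hI : InjOn I.restrict (S : Set (ι → E)))
    (hcard : #I ≤ coordRank (S : Set (ι → E))) (g : ι → E) :
    ∃ v ∈ S.direction, ∀ i ∈ I, v i = g i := by
  choose! v hv hv_ne hv_zero using
    fun i (hi : i ∈ I) => exists_mem_direction_of_card_le_coordRank hI hcard hi
  choose! c hc using fun i hi => exists_smul_eq_of_finrank_eq_one hE (hv_ne i hi) (g i)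
  refine ⟨∑ i ∈ I, c i • v i, sum_mem fun i hi => S.direction.smul_mem _ (hv i hi),
    fun j hj => ?_⟩
  rw [Finset.sum_apply, Finset.sum_eq_single_of_mem j hj fun i hi hij => ?_]
  · exact hc j hj
  · rw [Pi.smul_apply, hv_zero i hi j hj hij.symm, smul_zero]

variable [Finite ι]

lemma coordRank_eq_finrank_direction (hE : finrank R E = 1) {S : AffineSubspace R (ι → E)}
    (hS : (S : Set (ι → E)).Nonempty) :
    coordRank (S : Set (ι → E)) = finrank R S.direction := by
  obtain ⟨I, hcard, hI⟩ := exists_card_eq_coordRank (S : Set (ι → E))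
  obtain ⟨p, hp⟩ := hS
  have : Module.Finite R E := Module.finite_of_finrank_eq_succ hE
  let restrictI : S.direction →ₗ[R] I → E :=
    LinearMap.funLeft R E ((↑) : I → ι) ∘ₗ S.direction.subtype
  have bijective : Bijective restrictI := by
    refine ⟨fun v w hvw => Subtype.ext (add_right_cancel (b := p) (hI ?_ ?_ ?_)), fun g => ?_⟩
    · exact S.vadd_mem_of_mem_direction v.2 hp
    · exact S.vadd_mem_of_mem_direction w.2 hp
    · exact funext fun i => congrArg (· + p i) (congrFun hvw i)
    · classical
      obtain ⟨v, hv, hvg⟩ := exists_mem_direction_forall_eq hE hI hcard.le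
        fun i => if hi : i ∈ I then g ⟨i, hi⟩ else 0
      exact ⟨⟨v, hv⟩, funext fun i => (hvg i i.2).trans (dif_pos i.2)⟩
  rw [(LinearEquiv.ofBijective restrictI bijective).finrank_eq, Module.finrank_pi_fintype]
  simp [hE, hcard]

lemma eq_of_subset_of_coordRank_le (hE : finrank R E = 1) {S : AffineSubspace R (ι → E)}
    {B : Set (ι → E)} (hS : (S : Set (ι → E)).Nonempty) (hSB : (S : Set (ι → E)) ⊆ B)
    (hrank : coordRank B ≤ coordRank (S : Set (ι → E))) : (S : Set (ι → E)) = B := by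
  obtain ⟨I, hcard, hI⟩ := exists_card_eq_coordRank B
  obtain ⟨p, hp⟩ := hS
  refine hSB.antisymm fun b hb => ?_
  obtain ⟨v, hv, hvb⟩ :=
    exists_mem_direction_forall_eq hE (hI.mono hSB) (hcard.trans_le hrank) (b - p)
  have mem : v + p ∈ S := S.vadd_mem_of_mem_direction hv hp
  have : v + p = b := hI (hSB mem) hb <| funext fun i => by simp [hvb i i.2]
  exact this ▸ mem

end CoordRank

section AffineSubspace

variable {R V : Type*} [Ring R] [AddCommGroup V] [Module R V]

lemma mem_line_iff {p q x : V} : x ∈ line[R, p, q] ↔ ∃ c : R, x = p + c • (q - p) := by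
  simp only [mem_affineSpan_pair_iff_exists_lineMap_eq, AffineMap.lineMap_apply,
    vsub_eq_sub, vadd_eq_add, add_comm, eq_comm]

lemma mem_plane_iff {o p q x : V} :
    x ∈ affineSpan R {q, o, p} ↔ ∃ a b : R, x = o + a • (p - o) + b • (q - o) := by
  rw [← affineSpan_insert_affineSpan,
    AffineSubspace.mem_affineSpan_insert_iff (left_mem_affineSpan_pair R o p)]
  simp only [mem_line_iff, vsub_eq_sub, vadd_eq_add]
  constructor
  · rintro ⟨b, _, ⟨a, rfl⟩, rfl⟩
    exact ⟨a, b, add_comm _ _⟩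
  · rintro ⟨a, b, rfl⟩
    exact ⟨b, _, ⟨a, rfl⟩, add_comm _ _⟩

lemma line_le_plane (o p q : V) : line[R, p, q] ≤ affineSpan R {q, o, p} :=
  affineSpan_mono R (by simp [insert_subset_iff])

lemma exists_translate_iff {A : Set V} :
    (∃ (v : V) (S : Submodule R V), A = (v + ·) '' (S : Set V)) ↔
      A.Nonempty ∧ ∃ S : AffineSubspace R V, (S : Set V) = A := by
  have coe_mk' (v : V) (S : Submodule R V) :
      (AffineSubspace.mk' v S : Set V) = (v + ·) '' (S : Set V) := by
    ext x
    simp [AffineSubspace.mem_mk', neg_add_eq_sub]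
  constructor
  · rintro ⟨v, S, rfl⟩
    exact ⟨⟨v + 0, mem_image_of_mem _ S.zero_mem⟩, _, coe_mk' v S⟩
  · rintro ⟨⟨v, hv⟩, S, rfl⟩
    exact ⟨v, S.direction, by rw [← coe_mk', AffineSubspace.mk'_eq hv]⟩

lemma add_sub_mem {S : AffineSubspace R V} {x y z : V} (hx : x ∈ S) (hy : y ∈ S) (hz : z ∈ S) :
    x + (y - z) ∈ S :=
  add_comm (y - z) x ▸ S.vadd_mem_of_mem_direction (S.vsub_mem_direction hy hz) hx

/- Only the group structure that `T` inherits from its own scalars is used for addition; the lines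
supply closure under the other scalars. -/
lemma exists_coe_eq_of_line_le {R' : Type*} [Ring R'] [Module R' V] {T : AffineSubspace R V}
    (hT : ∀ p ∈ T, ∀ q ∈ T, (line[R', p, q] : Set V) ⊆ T) :
    ∃ T' : AffineSubspace R' V, (T' : Set V) = T := by
  refine ⟨⟨T, fun c p q r hp hq hr => ?_⟩, rfl⟩
  have mem : r + c • (p - q) = r + (q + c • (p - q) - q) := by abel
  rw [vadd_eq_add, add_comm, vsub_eq_sub, SetLike.mem_coe, mem]
  exact add_sub_mem hr (hT q hq p hp (mem_line_iff.2 ⟨c, rfl⟩)) hq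

lemma coe_plane_subset_of_line_subset {R' : Type*} [Ring R'] [Module R' V]
    {T : AffineSubspace R' V} {o p q : V} (hp : (line[R, o, p] : Set V) ⊆ T)
    (hq : (line[R, o, q] : Set V) ⊆ T) : (affineSpan R {q, o, p} : Set V) ⊆ T := by
  rintro x hx
  obtain ⟨a, b, rfl⟩ := mem_plane_iff.1 hx
  have mem : o + a • (p - o) + (o + b • (q - o) - o) ∈ T :=
    add_sub_mem (hp (mem_line_iff.2 ⟨a, rfl⟩)) (hq (mem_line_iff.2 ⟨b, rfl⟩))
      (hp (left_mem_affineSpan_pair R o p))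
  rwa [add_sub_cancel_left] at mem

end AffineSubspace

section Plane

variable {R V : Type*} [DivisionRing R] [AddCommGroup V] [Module R V]

lemma mem_line_swap {o x z : V} (hx : x ∈ line[R, o, z]) (hxo : x ≠ o) : z ∈ line[R, o, x] :=
  affineSpan_pair_eq_of_right_mem_of_ne hx hxo ▸ right_mem_affineSpan_pair R o z

lemma exists_mem_line_or_mem_parallel {o p q z : V} (hz : z ∈ affineSpan R {q, o, p}) :
    (∃ x ∈ line[R, p, q], x ∈ line[R, o, z]) ∨ z ∈ line[R, o, o + (q - p)] := by
  obtain ⟨a, b, rfl⟩ := mem_plane_iff.1 hz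
  simp only [mem_line_iff]
  by_cases hab : a + b = 0
  · refine .inr ⟨b, ?_⟩
    rw [eq_neg_of_add_eq_zero_left hab, add_sub_cancel_left, neg_smul, smul_sub, smul_sub, smul_sub]
    abel
  · refine .inl ⟨p + ((a + b)⁻¹ * b) • (q - p), ⟨_, rfl⟩, (a + b)⁻¹, ?_⟩
    have ha : (a + b)⁻¹ * a = 1 - (a + b)⁻¹ * b := by
      rw [eq_sub_iff_add_eq, ← mul_add, inv_mul_cancel₀ hab]
    rw [add_assoc, add_sub_cancel_left, smul_add, smul_smul, smul_smul, ha, sub_smul, one_smul,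
      smul_sub, smul_sub, smul_sub]
    abel

lemma coordRank_line {ι E : Type*} [Finite ι] [AddCommGroup E] [Module R E]
    (hE : finrank R E = 1) {p q : ι → E} (h : p ≠ q) :
    coordRank (line[R, p, q] : Set (ι → E)) = 1 := by
  rw [coordRank_eq_finrank_direction hE ⟨p, left_mem_affineSpan_pair R p q⟩, direction_affineSpan,
    vectorSpan_pair_rev, finrank_span_singleton (vsub_ne_zero.2 h.symm)]

end Plane

section TwoSided

variable {K V : Type*} [DivisionRing K] [AddCommGroup V] [Module K V] [Module Kᵐᵒᵖ V]

/-- `φ` turns right multiples of `u` into left ones. -/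
def Intertwines (φ : K → K) (u : V) : Prop :=
  ∀ c, op c • u = φ c • u

variable (K) in
/-- A vector `u` with `K u = u K`, that is, one whose left line is also its right line. -/
def IsTwoSided (u : V) : Prop :=
  ∃ φ : K → K, Surjective φ ∧ Intertwines φ u

lemma isTwoSided_zero : IsTwoSided K (0 : V) :=
  ⟨id, surjective_id, fun c => by rw [smul_zero, smul_zero]⟩

variable {φ ψ χ : K → K} {u v w : V}

lemma Intertwines.eq_of_sub (h : LinearIndependent K ![u, v]) (hu : Intertwines φ u)
    (hv : Intertwines ψ v) (huv : Intertwines χ (v - u)) : φ = ψ := by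
  funext c
  have key : -φ c • u + ψ c • v = -χ c • u + χ c • v := by
    simpa only [smul_sub, hu c, hv c, neg_smul, neg_add_eq_sub] using huv c
  obtain ⟨hφ, hψ⟩ := h.eq_of_pair key
  exact (neg_injective hφ).trans hψ.symm

/- For points off the line `pq` the common `φ` is forced by the pair `q - p`, `x - p`; for points on
it the role of `q` is taken over by `r`. -/
lemma exists_intertwines_of_pairwise {X : Set V}
    (hX : ∀ x ∈ X, ∀ y ∈ X, IsTwoSided K (x - y)) {p q r : V} (hp : p ∈ X) (hq : q ∈ X) (hr : r ∈ X)
    (h : LinearIndependent K ![q - p, r - p]) :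
    ∃ φ : K → K, Surjective φ ∧ ∀ x ∈ X, Intertwines φ (x - p) := by
  have agree {x y : V} {φ : K → K} (hx : x ∈ X) (hy : y ∈ X)
      (hxy : LinearIndependent K ![x - p, y - p]) (hφ : Intertwines φ (x - p)) :
      Intertwines φ (y - p) := by
    obtain ⟨ψ, -, hψ⟩ := hX y hy p hp
    obtain ⟨χ, -, hχ⟩ := hX y hy x hx
    exact hφ.eq_of_sub hxy hψ (by rwa [sub_sub_sub_cancel_right]) ▸ hψ
  have hqp : q - p ≠ 0 := h.ne_zero 0
  obtain ⟨φ, hφ, hqφ⟩ := hX q hq p hp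
  refine ⟨φ, hφ, fun x hx => ?_⟩
  by_cases hqx : LinearIndependent K ![q - p, x - p]
  · exact agree hq hx hqx hqφ
  · obtain ⟨a, ha⟩ : ∃ a : K, a • (q - p) = x - p := by
      simpa only [LinearIndependent.pair_iff' hqp, not_forall, not_not] using hqx
    by_cases ha0 : a = 0
    · rw [← ha, ha0, zero_smul]
      exact fun c => by rw [smul_zero, smul_zero]
    · refine agree hr hx ?_ (agree hq hr h hqφ)
      rw [← ha, ← one_smul K (r - p)]
      exact (LinearIndependent.pair_smul_smul_iff isUnit_one (.mk0 a ha0)).2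
        (LinearIndependent.pair_symm_iff.1 h)

variable [SMulCommClass K Kᵐᵒᵖ V]

lemma IsTwoSided.smul (hu : IsTwoSided K u) (a : K) : IsTwoSided K (a • u) := by
  by_cases ha : a = 0
  · exact ha ▸ (zero_smul K u).symm ▸ isTwoSided_zero
  obtain ⟨φ, hφ, hu⟩ := hu
  refine ⟨fun c => a * φ c * a⁻¹, fun d => ?_, fun c => ?_⟩
  · obtain ⟨c, hc⟩ := hφ (a⁻¹ * d * a)
    exact ⟨c, by simp [hc, mul_assoc, ha]⟩
  · rw [← smul_comm, hu c, smul_smul, smul_smul, inv_mul_cancel_right₀ ha]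

lemma Intertwines.coeff_mul_eq (h : LinearIndependent K ![u, v]) (hu : Intertwines φ u)
    (hv : Intertwines φ v) {a b : K} (hab : Intertwines χ (a • u + b • v)) (c : K) :
    a * φ c = χ c * a ∧ b * φ c = χ c * b := by
  refine h.eq_of_pair ?_
  simpa only [smul_add, ← smul_comm _ (op c), hu c, hv c, smul_smul] using hab c

lemma Intertwines.commute_coeff (h : LinearIndependent K ![u, v]) (hφ : Surjective φ)
    (hu : Intertwines φ u) (hv : Intertwines φ v) {a b : K}
    (hab : IsTwoSided K (a • u + b • v)) : Commute a b := by
  obtain ⟨χ, -, hab⟩ := hab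
  obtain ⟨c, rfl⟩ := hφ a
  obtain ⟨ha, hb⟩ := hu.coeff_mul_eq h hv hab c
  by_cases hc : φ c = 0
  · exact hc ▸ Commute.zero_left b
  · rw [Commute, SemiconjBy, hb, mul_right_cancel₀ hc ha]

lemma Intertwines.not_isTwoSided_sub (h : LinearIndependent K ![u, v]) (hφ : Surjective φ)
    (hu : Intertwines φ u) (hv : Intertwines φ v) {b c : K} (hbc : ¬ Commute b c)
    (hw : Intertwines φ w) (hspan : w ∈ span K {u, v}) :
    ¬ IsTwoSided K (w - (b • u + c • v)) := by
  obtain ⟨α, β, rfl⟩ := mem_span_pair.1 hspan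
  have central (d : K) : Commute α d ∧ Commute β d := by
    obtain ⟨d, rfl⟩ := hφ d
    exact hu.coeff_mul_eq h hv hw d
  rw [add_sub_add_comm, ← sub_smul, ← sub_smul]
  intro two_sided
  have hcomm : Commute (α - b) (β - c) := hu.commute_coeff h hφ hv two_sided
  refine hbc ?_
  rw [← sub_sub_cancel α b, ← sub_sub_cancel β c]
  exact .sub_left (central _).1 (.sub_right (central _).2.symm hcomm)

lemma op_smul_mem_span (hu : IsTwoSided K u) (hv : IsTwoSided K v) (c : K)
    (hw : w ∈ span K {u, v}) : op c • w ∈ span K {u, v} := by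
  obtain ⟨φ, -, hu⟩ := hu
  obtain ⟨ψ, -, hv⟩ := hv
  obtain ⟨a, b, rfl⟩ := mem_span_pair.1 hw
  rw [smul_add, ← smul_comm a, ← smul_comm b, hu c, hv c, smul_smul, smul_smul]
  exact mem_span_pair.2 ⟨_, _, rfl⟩

lemma exists_affineSubspace_coe_eq_mk' (hu : IsTwoSided K u) (hv : IsTwoSided K v) (p : V) :
    ∃ S : AffineSubspace Kᵐᵒᵖ V, (S : Set V) = AffineSubspace.mk' p (span K {u, v}) :=
  let S : Submodule Kᵐᵒᵖ V :=
    { (span K {u, v}).toAddSubmonoid with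
      smul_mem' := fun c _ hw => op_smul_mem_span hu hv c.unop hw }
  ⟨AffineSubspace.mk' p S, rfl⟩

end TwoSided

section Flat

/-- The side from which scalars act. -/
inductive Side
  | left
  | right

/-- The scalars acting on `k^ι` from a given side: `k` on the left, `kᵐᵒᵖ` on the right. -/
def Side.Scalars (k : Type*) : Side → Type _
  | .left => k
  | .right => kᵐᵒᵖ

variable [DivisionRing k]

instance (s : Side) : DivisionRing (s.Scalars k) :=
  match s with
  | .left => inferInstanceAs (DivisionRing k)
  | .right => inferInstanceAs (DivisionRing kᵐᵒᵖ)

instance (s : Side) : Module (s.Scalars k) k :=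
  match s with
  | .left => inferInstanceAs (Module k k)
  | .right => inferInstanceAs (Module kᵐᵒᵖ k)

lemma finrank_scalars : ∀ s : Side, finrank (s.Scalars k) k = 1
  | .left => finrank_self k
  | .right => (LinearEquiv.finrank_eq (opLinearEquiv kᵐᵒᵖ)).trans (finrank_self kᵐᵒᵖ)

variable {ι : Type*}

/-- `A` is empty or an affine subspace of `k^ι` for the scalars on side `s`. -/
def IsFlat (s : Side) (A : Set (ι → k)) : Prop :=
  ∃ S : AffineSubspace (s.Scalars k) (ι → k), (S : Set (ι → k)) = A

lemma isFlat_line (s : Side) (p q : ι → k) :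
    IsFlat s (line[s.Scalars k, p, q] : Set (ι → k)) :=
  ⟨_, rfl⟩

lemma IsFlat.line_subset {s : Side} {A : Set (ι → k)} (hA : IsFlat s A) {p q : ι → k} (hp : p ∈ A)
    (hq : q ∈ A) : (line[s.Scalars k, p, q] : Set (ι → k)) ⊆ A := by
  obtain ⟨S, rfl⟩ := hA
  exact affineSpan_pair_le_of_mem_of_mem hp hq

lemma IsFlat.of_line_subset {s t : Side} {A : Set (ι → k)} (hA : IsFlat s A)
    (h : ∀ p ∈ A, ∀ q ∈ A, (line[t.Scalars k, p, q] : Set (ι → k)) ⊆ A) : IsFlat t A := by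
  obtain ⟨S, rfl⟩ := hA
  exact exists_coe_eq_of_line_le h

lemma coe_line_eq_of_isTwoSided {p q : ι → k} (h : IsTwoSided k (q - p)) (s t : Side) :
    (line[s.Scalars k, p, q] : Set (ι → k)) = line[t.Scalars k, p, q] := by
  obtain ⟨φ, hφ, hpq⟩ := h
  have left_eq_right : (line[k, p, q] : Set (ι → k)) = line[kᵐᵒᵖ, p, q] := by
    ext x
    rw [SetLike.mem_coe, SetLike.mem_coe, mem_line_iff, mem_line_iff, hφ.exists,
      op_surjective.exists]
    simp only [hpq _]
  cases s <;> cases t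
  exacts [rfl, left_eq_right, left_eq_right.symm, rfl]

lemma isTwoSided_of_coe_line_eq {p q : ι → k}
    (h : (line[k, p, q] : Set (ι → k)) = line[kᵐᵒᵖ, p, q]) : IsTwoSided k (q - p) := by
  obtain rfl | hpq := eq_or_ne p q
  · exact sub_self p ▸ isTwoSided_zero
  have right_to_left (c : k) : ∃ d : k, op c • (q - p) = d • (q - p) := by
    obtain ⟨d, hd⟩ := mem_line_iff.1 ((Set.ext_iff.1 h _).2 (mem_line_iff.2 ⟨op c, rfl⟩))
    exact ⟨d, add_left_cancel hd⟩
  have left_to_right (d : k) : ∃ c : k, op c • (q - p) = d • (q - p) := by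
    obtain ⟨c, hc⟩ := mem_line_iff.1 ((Set.ext_iff.1 h _).1 (mem_line_iff.2 ⟨d, rfl⟩))
    exact ⟨c.unop, (add_left_cancel hc).symm⟩
  choose φ hφ using right_to_left
  refine ⟨φ, fun d => ?_, hφ⟩
  obtain ⟨c, hc⟩ := left_to_right d
  exact ⟨c, smul_left_injective k (sub_ne_zero.2 hpq.symm) ((hφ c).symm.trans hc)⟩

lemma isTwoSided_of_commute (h : ∀ b c : k, Commute b c) (u : ι → k) : IsTwoSided k u :=
  ⟨id, surjective_id, fun c => funext fun i => h (u i) c⟩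

lemma isTwoSided_sub_of_mem_line {s : Side} {p q x : ι → k} (h : IsTwoSided k (q - p))
    (hx : x ∈ line[s.Scalars k, p, q]) : IsTwoSided k (x - p) := by
  obtain ⟨c, rfl⟩ : ∃ c : k, x = p + c • (q - p) :=
    mem_line_iff.1 ((Set.ext_iff.1 (coe_line_eq_of_isTwoSided h s .left) x).1 hx)
  rw [add_sub_cancel_left]
  exact h.smul c

lemma isFlat_mk'_span_pair {u v : ι → k} (hu : IsTwoSided k u) (hv : IsTwoSided k v)
    (p : ι → k) : ∀ s : Side, IsFlat s (AffineSubspace.mk' p (span k {u, v}) : Set (ι → k))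
  | .left => ⟨AffineSubspace.mk' p (span k {u, v}), rfl⟩
  | .right => exists_affineSubspace_coe_eq_mk' hu hv p

variable [Finite ι]

lemma IsFlat.eq_of_subset {s : Side} {A B : Set (ι → k)} (hA : IsFlat s A) (hne : A.Nonempty)
    (hAB : A ⊆ B) (hrank : coordRank B ≤ coordRank A) : A = B := by
  obtain ⟨S, rfl⟩ := hA
  exact eq_of_subset_of_coordRank_le (finrank_scalars s) hne hAB hrank

lemma coe_line_eq_of_subset {s t : Side} {a b c d : ι → k} (hab : a ≠ b) (hcd : c ≠ d)
    (h : (line[s.Scalars k, a, b] : Set (ι → k)) ⊆ line[t.Scalars k, c, d]) :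
    (line[s.Scalars k, a, b] : Set (ι → k)) = line[t.Scalars k, c, d] :=
  (isFlat_line s a b).eq_of_subset ⟨a, left_mem_affineSpan_pair _ _ _⟩ h
    (by rw [coordRank_line (finrank_scalars s) hab, coordRank_line (finrank_scalars t) hcd])

lemma coordRank_mk'_span_pair_le (p u v : ι → k) :
    coordRank (AffineSubspace.mk' p (span k {u, v}) : Set (ι → k)) ≤ 2 := by
  classical
  rw [coordRank_eq_finrank_direction (finrank_self k) ⟨p, AffineSubspace.self_mem_mk' _ _⟩,
    AffineSubspace.direction_mk', ← Finset.coe_pair]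
  exact (finrank_span_finset_le_card {u, v}).trans Finset.card_le_two

lemma IsFlat.exists_ssubset {s : Side} {A : Set (ι → k)} (hA : IsFlat s A) (hne : A.Nonempty)
    (hrank : coordRank A < Nat.card ι) :
    ∃ B, IsFlat s B ∧ A ⊂ B ∧ coordRank B ≤ coordRank A + 1 := by
  have := Fintype.ofFinite ι
  obtain ⟨S, rfl⟩ := hA
  have hs := finrank_scalars (k := k) s
  have : Module.Finite (s.Scalars k) k := Module.finite_of_finrank_eq_succ hs
  obtain ⟨u, hu⟩ : ∃ u, u ∉ S := by
    by_contra! h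
    have htop : S = ⊤ := eq_top_iff.2 fun x _ => h x
    rw [coordRank_eq_finrank_direction hs hne, htop, AffineSubspace.direction_top, finrank_top,
      finrank_pi_fintype, Nat.card_eq_fintype_card] at hrank
    simp [hs] at hrank
  have hsub : (S : Set (ι → k)) ⊆ affineSpan (s.Scalars k) (insert u (S : Set (ι → k))) :=
    (subset_insert _ _).trans (subset_affineSpan _ _)
  refine ⟨_, ⟨_, rfl⟩, ⟨hsub, fun h => hu (h (subset_affineSpan _ _ (mem_insert u _)))⟩, ?_⟩
  rw [coordRank_eq_finrank_direction hs (hne.mono hsub), coordRank_eq_finrank_direction hs hne,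
    direction_affineSpan]
  exact finrank_vectorSpan_insert_le S u

end Flat

section Map

variable [DivisionRing k] {ι : Type*}

/-- `f` maps every left or right affine subspace onto a left or right affine subspace. -/
def PreservesFlats (f : (ι → k) → (ι → k)) : Prop :=
  ∀ s A, IsFlat s A → ∃ t, IsFlat t (f '' A)

namespace PreservesFlats

variable {f : (ι → k) → (ι → k)} [Finite ι]

lemma coordRank_image_add_le (hf : PreservesFlats f) (hinj : Injective f) :
    ∀ (m : ℕ) {s : Side} {A : Set (ι → k)}, IsFlat s A → A.Nonempty →
      coordRank A + m ≤ Nat.card ι → coordRank (f '' A) + m ≤ coordRank (range f)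
  | 0, _, A, _, _, _ => coordRank_mono (image_subset_range f A)
  | m + 1, s, A, hA, hne, hm => by
    obtain ⟨B, hB, hAB, hrankB⟩ := hA.exists_ssubset hne (by lia)
    obtain ⟨t, ht⟩ := hf s A hA
    have step : coordRank (f '' A) < coordRank (f '' B) := by
      by_contra! hle
      have image_eq := ht.eq_of_subset (hne.image f) (image_mono hAB.subset) hle
      exact hAB.ne (hinj.image_injective image_eq)
    have := hf.coordRank_image_add_le hinj m hB (hne.mono hAB.subset) (by lia)
    lia

lemma coordRank_image_le (hf : PreservesFlats f) (hinj : Injective f) {s : Side} {A : Set (ι → k)}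
    (hA : IsFlat s A) (hne : A.Nonempty) : coordRank (f '' A) ≤ coordRank A := by
  have := hf.coordRank_image_add_le hinj (Nat.card ι - coordRank A) hA hne
  have := coordRank_le_natCard A
  have := coordRank_le_natCard (range f)
  lia

lemma surjective (hf : PreservesFlats f) (hinj : Injective f) : Surjective f := by
  obtain ⟨t, ht⟩ := hf .left univ ⟨⊤, rfl⟩
  rw [image_univ] at ht
  have rank_zero : coordRank ({0} : Set (ι → k)) = 0 :=
    Nat.le_zero.1 (coordRank_le_card (I := ∅) (subsingleton_singleton.injOn _))
  have full : coordRank (univ : Set (ι → k)) ≤ coordRank (range f) := by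
    have := hf.coordRank_image_add_le hinj (Nat.card ι) (isFlat_line .left 0 0) ⟨0, by simp⟩
      (by simp [rank_zero])
    have := coordRank_le_natCard (univ : Set (ι → k))
    lia
  exact range_eq_univ.1 (ht.eq_of_subset ⟨f 0, 0, rfl⟩ (subset_univ _) full)

lemma exists_image_line (hf : PreservesFlats f) (hinj : Injective f) (s : Side) (p q : ι → k) :
    ∃ t : Side, f '' line[s.Scalars k, p, q] = line[t.Scalars k, f p, f q] := by
  obtain ⟨t, ht⟩ := hf s _ (isFlat_line s p q)
  obtain rfl | hpq := eq_or_ne p q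
  · exact ⟨s, by simp⟩
  refine ⟨t, ((isFlat_line t _ _).eq_of_subset ⟨f p, left_mem_affineSpan_pair _ _ _⟩ ?_ ?_).symm⟩
  · exact ht.line_subset (mem_image_of_mem f (left_mem_affineSpan_pair _ _ _))
      (mem_image_of_mem f (right_mem_affineSpan_pair _ _ _))
  · rw [coordRank_line (finrank_scalars t) (hinj.ne hpq)]
    exact (hf.coordRank_image_le hinj (isFlat_line s p q)
      ⟨p, left_mem_affineSpan_pair _ _ _⟩).trans (coordRank_line (finrank_scalars s) hpq).le

lemma exists_line_image_eq_of_not_isTwoSided (hf : PreservesFlats f) (hinj : Injective f)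
    {p q : ι → k} (h : ¬ IsTwoSided k (q - p)) (t : Side) :
    ∃ s : Side, f '' line[s.Scalars k, p, q] = line[t.Scalars k, f p, f q] := by
  obtain ⟨l, hl⟩ := hf.exists_image_line hinj .left p q
  obtain ⟨r, hr⟩ := hf.exists_image_line hinj .right p q
  have hlr : l ≠ r := fun hlr =>
    h (isTwoSided_of_coe_line_eq (hinj.image_injective (hl.trans (hlr ▸ hr.symm))))
  obtain rfl | rfl : t = l ∨ t = r := by cases t <;> cases l <;> cases r <;> simp_all
  exacts [⟨.left, hl⟩, ⟨.right, hr⟩]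

section TwoSidedPlane

/- In a two-sided plane `A`, the point `y` sees no preimage of the line through `f p`, `f q` in a
two-sided direction. -/
variable {A : Set (ι → k)} {p q y z w : ι → k} {t : Side}
  (hf : PreservesFlats f) (hinj : Injective f) (hA : ∀ s, IsFlat s A) (hrank : coordRank A ≤ 2)
  (hp : p ∈ A) (hq : q ∈ A) (hy : y ∈ A) (hpq : p ≠ q)
  (hgen : ∀ x ∈ A, f x ∈ line[t.Scalars k, f p, f q] → ¬ IsTwoSided k (x - y))

include hf hinj hA hrank hp hq hy hpq hgen

lemma image_eq_plane : f '' A = affineSpan (t.Scalars k) {f q, f y, f p} := by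
  have line_subset {x : ι → k} (hx : x ∈ A) (hfx : f x ∈ line[t.Scalars k, f p, f q]) :
      (line[t.Scalars k, f y, f x] : Set (ι → k)) ⊆ f '' A := by
    obtain ⟨s, hs⟩ := hf.exists_line_image_eq_of_not_isTwoSided hinj (hgen x hx hfx) t
    exact hs ▸ image_mono ((hA s).line_subset hy hx)
  have plane_subset : (affineSpan (t.Scalars k) {f q, f y, f p} : Set (ι → k)) ⊆ f '' A := by
    obtain ⟨t', T, hT⟩ := hf t A (hA t)
    rw [← hT]
    exact coe_plane_subset_of_line_subset
      (hT ▸ line_subset hp (left_mem_affineSpan_pair _ _ _))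
      (hT ▸ line_subset hq (right_mem_affineSpan_pair _ _ _))
  have y_mem_plane : f y ∈ (affineSpan (t.Scalars k) {f q, f y, f p} : Set (ι → k)) :=
    subset_affineSpan _ _ (by simp)
  have one_lt_rank : 1 < coordRank (affineSpan (t.Scalars k) {f q, f y, f p} : Set (ι → k)) := by
    by_contra! hle
    have line_eq := (isFlat_line t (f p) (f q)).eq_of_subset ⟨f p, left_mem_affineSpan_pair _ _ _⟩
      (line_le_plane (f y) (f p) (f q)) (by rwa [coordRank_line (finrank_scalars t) (hinj.ne hpq)])
    exact hgen y hy (line_eq.superset y_mem_plane) (sub_self y ▸ isTwoSided_zero)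
  exact (IsFlat.eq_of_subset ⟨_, rfl⟩ ⟨f y, y_mem_plane⟩ plane_subset
    ((hf.coordRank_image_le hinj (hA t) ⟨y, hy⟩).trans (hrank.trans one_lt_rank))).symm

lemma image_mem_parallel (hz : z ∈ A) (hzy : IsTwoSided k (z - y)) :
    f z ∈ line[t.Scalars k, f y, f y + (f q - f p)] := by
  have image_eq := hf.image_eq_plane hinj hA hrank hp hq hy hpq hgen
  refine (exists_mem_line_or_mem_parallel
    (image_eq.subset (mem_image_of_mem f hz))).resolve_left ?_
  rintro ⟨_, hx, hxz⟩
  obtain ⟨x, hxA, rfl⟩ := image_eq.superset (line_le_plane (f y) (f p) (f q) hx)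
  have hxy : x ≠ y := fun h => hgen x hxA hx (by rw [h, sub_self]; exact isTwoSided_zero)
  have hzy' : z ≠ y := by
    rintro rfl
    exact hinj.ne hxy (by simpa using hxz)
  obtain ⟨s, hs⟩ := hf.exists_line_image_eq_of_not_isTwoSided hinj (hgen x hxA hx) t
  have z_mem : z ∈ line[s.Scalars k, y, x] :=
    hinj.mem_set_image.1 (hs.superset (mem_line_swap hxz (hinj.ne hxy)))
  exact hgen x hxA hx (isTwoSided_sub_of_mem_line hzy (mem_line_swap z_mem hzy'))

lemma image_line_eq_parallel (hz : z ∈ A) (hzy : IsTwoSided k (z - y)) (hne : y ≠ z) :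
    f '' line[k, y, z] = line[t.Scalars k, f y, f y + (f q - f p)] := by
  have subset : f '' line[k, y, z] ⊆ line[t.Scalars k, f y, f y + (f q - f p)] :=
    image_subset_iff.2 fun x hx => hf.image_mem_parallel hinj hA hrank hp hq hy hpq hgen
      ((hA .left).line_subset hy hz hx) (isTwoSided_sub_of_mem_line (s := .left) hzy hx)
  have hpq' : f y ≠ f y + (f q - f p) := by simpa [eq_comm, sub_eq_zero] using hinj.ne hpq
  obtain ⟨r, hr⟩ := hf.exists_image_line hinj .left y z
  exact hr.trans (coe_line_eq_of_subset (hinj.ne hne) hpq' (hr ▸ subset))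

/- Both lines through `y` are mapped onto the parallel to the line through `f p`, `f q`. -/
lemma not_linearIndependent_sub (hz : z ∈ A) (hzy : IsTwoSided k (z - y)) (hw : w ∈ A)
    (hwy : IsTwoSided k (w - y)) : ¬ LinearIndependent k ![z - y, w - y] := by
  intro h
  have hzy0 : z - y ≠ 0 := h.ne_zero 0
  have hwy0 : w - y ≠ 0 := h.ne_zero 1
  have image_eq {x : ι → k} := hf.image_line_eq_parallel hinj hA hrank hp hq hy hpq hgen (z := x)
  have line_eq : (line[k, y, z] : Set (ι → k)) = line[k, y, w] := hinj.image_injective <|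
    (image_eq hz hzy (sub_ne_zero.1 hzy0).symm).trans
      (image_eq hw hwy (sub_ne_zero.1 hwy0).symm).symm
  obtain ⟨c, hc⟩ := mem_line_iff.1 (line_eq.superset (right_mem_affineSpan_pair k y w))
  exact (LinearIndependent.pair_iff' hzy0).1 h c (sub_eq_of_eq_add' hc).symm

end TwoSidedPlane

section BentLine

variable {p q : ι → k} {s t : Side}
  (hf : PreservesFlats f) (hinj : Injective f) (hpq : p ≠ q) (hsub : IsTwoSided k (q - p))
  (hne : f '' line[s.Scalars k, p, q] ≠ line[t.Scalars k, f p, f q])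

include hf hinj hpq hsub hne

lemma isTwoSided_sub_of_image_mem_line {x y : ι → k} (hx : f x ∈ line[t.Scalars k, f p, f q])
    (hy : f y ∈ line[t.Scalars k, f p, f q]) : IsTwoSided k (x - y) := by
  by_contra hxy
  obtain ⟨r, hr⟩ := hf.exists_line_image_eq_of_not_isTwoSided hinj hxy t
  have hyx : f y ≠ f x := fun h => hxy (by rw [hinj h, sub_self]; exact isTwoSided_zero)
  rw [affineSpan_pair_eq_of_mem_of_mem_of_ne hy hx hyx] at hr
  have hp : p ∈ line[r.Scalars k, y, x] :=
    hinj.mem_set_image.1 (hr.superset (left_mem_affineSpan_pair _ _ _))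
  have hq : q ∈ line[r.Scalars k, y, x] :=
    hinj.mem_set_image.1 (hr.superset (right_mem_affineSpan_pair _ _ _))
  refine hne (Eq.trans ?_ hr)
  rw [coe_line_eq_of_isTwoSided hsub s r, affineSpan_pair_eq_of_mem_of_mem_of_ne hp hq hpq]

lemma exists_linearIndependent_of_image_mem_line :
    ∃ r, f r ∈ line[t.Scalars k, f p, f q] ∧ LinearIndependent k ![q - p, r - p] := by
  by_contra! h
  have line_subset :
      (line[t.Scalars k, f p, f q] : Set (ι → k)) ⊆ f '' line[s.Scalars k, p, q] := by
    intro x hx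
    obtain ⟨r, rfl⟩ := hf.surjective hinj x
    have dependent := h r hx
    rw [LinearIndependent.pair_iff' (sub_ne_zero.2 hpq.symm)] at dependent
    push Not at dependent
    obtain ⟨c, hc⟩ := dependent
    refine mem_image_of_mem f ?_
    rw [coe_line_eq_of_isTwoSided hsub s .left]
    exact mem_line_iff.2 ⟨(c : k), (add_eq_of_eq_sub' hc).symm⟩
  obtain ⟨r, hr⟩ := hf.exists_image_line hinj s p q
  exact hne (hr.trans (coe_line_eq_of_subset (hinj.ne hpq) (hinj.ne hpq) (hr ▸ line_subset)).symm)

lemma exists_intertwines_of_image_mem_line :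
    ∃ (r : ι → k) (φ : k → k), LinearIndependent k ![q - p, r - p] ∧ Surjective φ ∧
      Intertwines φ (q - p) ∧ Intertwines φ (r - p) ∧
        ∀ x, f x ∈ line[t.Scalars k, f p, f q] → Intertwines φ (x - p) := by
  obtain ⟨r, hr, hli⟩ := hf.exists_linearIndependent_of_image_mem_line hinj hpq hsub hne
  have hp := left_mem_affineSpan_pair (t.Scalars k) (f p) (f q)
  have hq := right_mem_affineSpan_pair (t.Scalars k) (f p) (f q)
  obtain ⟨φ, hφ, hφX⟩ := exists_intertwines_of_pairwise
    (X := {x | f x ∈ line[t.Scalars k, f p, f q]})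
    (fun x hx y hy => hf.isTwoSided_sub_of_image_mem_line hinj hpq hsub hne hx hy) hp hq hr hli
  exact ⟨r, φ, hli, hφ, hφX q hq, hφX r hr, hφX⟩

end BentLine

lemma image_line_eq_of_isTwoSided (hf : PreservesFlats f) (hinj : Injective f) {p q : ι → k}
    (hsub : IsTwoSided k (q - p)) (s t : Side) :
    f '' line[s.Scalars k, p, q] = line[t.Scalars k, f p, f q] := by
  obtain rfl | hpq := eq_or_ne p q
  · simp
  by_contra hne
  obtain ⟨b, c, hbc⟩ : ∃ b c : k, ¬ Commute b c := by
    by_contra! hcomm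
    obtain ⟨r, hr⟩ := hf.exists_image_line hinj s p q
    exact hne (hr.trans (coe_line_eq_of_isTwoSided (isTwoSided_of_commute hcomm _) r t))
  obtain ⟨r, φ, hli, hφ, hqφ, hrφ, hφX⟩ :=
    hf.exists_intertwines_of_image_mem_line hinj hpq hsub hne
  let S := span k {q - p, r - p}
  let y := b • (q - p) + c • (r - p) + p
  have hqS : q - p ∈ S := mem_span_of_mem (by simp)
  have hrS : r - p ∈ S := mem_span_of_mem (by simp)
  have add_mem {v x : ι → k} (hv : v ∈ S) (hx : x ∈ AffineSubspace.mk' p S) :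
      v + x ∈ AffineSubspace.mk' p S :=
    AffineSubspace.vadd_mem_of_mem_direction (by rwa [AffineSubspace.direction_mk']) hx
  have hp : p ∈ AffineSubspace.mk' p S := AffineSubspace.self_mem_mk' p S
  have hq : q ∈ AffineSubspace.mk' p S := sub_add_cancel q p ▸ add_mem hqS hp
  have hy : y ∈ AffineSubspace.mk' p S := add_mem (mem_span_pair.2 ⟨b, c, rfl⟩) hp
  have generic : ∀ x ∈ AffineSubspace.mk' p S,
      f x ∈ line[t.Scalars k, f p, f q] → ¬ IsTwoSided k (x - y) := fun x hx hfx =>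
    (sub_add_eq_sub_sub_swap x _ p).symm ▸
      hqφ.not_isTwoSided_sub hli hφ hrφ hbc (hφX x hfx) (AffineSubspace.mem_mk'.1 hx)
  refine hf.not_linearIndependent_sub hinj (isFlat_mk'_span_pair ⟨φ, hφ, hqφ⟩ ⟨φ, hφ, hrφ⟩ p)
    (coordRank_mk'_span_pair_le p _ _) hp hq hy hpq generic
    (z := q - p + y) (w := r - p + y) (add_mem hqS hy) ?_ (add_mem hrS hy) ?_ ?_
  · exact (add_sub_cancel_right (q - p) y).symm ▸ ⟨φ, hφ, hqφ⟩
  · exact (add_sub_cancel_right (r - p) y).symm ▸ ⟨φ, hφ, hrφ⟩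
  · rwa [add_sub_cancel_right, add_sub_cancel_right]

lemma exists_line_image_eq (hf : PreservesFlats f) (hinj : Injective f) (p q : ι → k) (t : Side) :
    ∃ s : Side, f '' line[s.Scalars k, p, q] = line[t.Scalars k, f p, f q] := by
  by_cases h : IsTwoSided k (q - p)
  · exact ⟨t, hf.image_line_eq_of_isTwoSided hinj h t t⟩
  · exact hf.exists_line_image_eq_of_not_isTwoSided hinj h t

theorem forall_isFlat_image_iff (hf : PreservesFlats f) (hinj : Injective f) {s : Side}
    {A : Set (ι → k)} (hA : IsFlat s A) :
    (∀ t, IsFlat t (f '' A)) ↔ ∀ t, IsFlat t A := by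
  constructor
  · refine fun himage t => hA.of_line_subset fun p hp q hq => ?_
    obtain ⟨r, hr⟩ := hf.exists_image_line hinj t p q
    rw [← image_subset_image_iff hinj, hr]
    exact (himage r).line_subset (mem_image_of_mem f hp) (mem_image_of_mem f hq)
  · intro hA_all t
    obtain ⟨r, hr⟩ := hf s A hA
    refine hr.of_line_subset ?_
    rintro _ ⟨p, hp, rfl⟩ _ ⟨q, hq, rfl⟩
    obtain ⟨s', hs'⟩ := hf.exists_line_image_eq hinj p q t
    exact hs' ▸ image_mono ((hA_all s').line_subset hp hq)

end PreservesFlats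

end Map

section Fin

variable [DivisionRing k] {n : ℕ} {A : Set (Fin n → k)} {f : (Fin n → k) → (Fin n → k)}

lemma isLeftAff_iff : IsLeftAff A ↔ A.Nonempty ∧ IsFlat .left A :=
  exists_translate_iff

lemma isRightAff_iff : IsRightAff A ↔ A.Nonempty ∧ IsFlat .right A :=
  exists_translate_iff

lemma isLeftAff_or_isRightAff_iff :
    IsLeftAff A ∨ IsRightAff A ↔ A.Nonempty ∧ ∃ s, IsFlat s A := by
  rw [isLeftAff_iff, isRightAff_iff, ← and_or_left]
  exact and_congr_right fun _ => ⟨fun h => h.elim (⟨_, ·⟩) (⟨_, ·⟩),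
    fun ⟨s, hs⟩ => by cases s <;> tauto⟩

lemma isLeftAff_and_isRightAff_iff :
    IsLeftAff A ∧ IsRightAff A ↔ A.Nonempty ∧ ∀ s, IsFlat s A := by
  rw [isLeftAff_iff, isRightAff_iff, ← and_and_left]
  exact and_congr_right fun _ => ⟨fun h s => by cases s <;> tauto, fun h => ⟨h _, h _⟩⟩

lemma PreservesFlats.of_isLeftAff_or_isRightAff
    (hf : ∀ A : Set (Fin n → k), IsLeftAff A ∨ IsRightAff A →
      IsLeftAff (f '' A) ∨ IsRightAff (f '' A)) : PreservesFlats f := by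
  intro s A hA
  obtain rfl | hne := A.eq_empty_or_nonempty
  · exact ⟨s, (image_empty f).symm ▸ hA⟩
  · exact (isLeftAff_or_isRightAff_iff.1
      (hf A (isLeftAff_or_isRightAff_iff.2 ⟨hne, s, hA⟩))).2

end Fin

end SidedAffine

/-- Corollary of Lemma 3: such an `f` takes two-sided affine subspaces to two-sided
ones and purely left/right affine subspaces to purely left/right ones. -/
theorem stmt_6 [DivisionRing k] {n : ℕ} (f : (Fin n → k) → (Fin n → k))
    (hinj : Function.Injective f)
    (hf : ∀ A : Set (Fin n → k), (IsLeftAff A ∨ IsRightAff A) →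
      (IsLeftAff (f '' A) ∨ IsRightAff (f '' A))) :
    (∀ A : Set (Fin n → k), IsLeftAff A ∧ IsRightAff A →
        IsLeftAff (f '' A) ∧ IsRightAff (f '' A)) ∧
    (∀ A : Set (Fin n → k),
      ((IsLeftAff A ∧ ¬ IsRightAff A) ∨ (IsRightAff A ∧ ¬ IsLeftAff A)) →
      ((IsLeftAff (f '' A) ∧ ¬ IsRightAff (f '' A)) ∨
        (IsRightAff (f '' A) ∧ ¬ IsLeftAff (f '' A)))) := by
  have hflat := SidedAffine.PreservesFlats.of_isLeftAff_or_isRightAff hf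
  have two_sided_image_iff (A : Set (Fin n → k)) (hA : IsLeftAff A ∨ IsRightAff A) :
      IsLeftAff (f '' A) ∧ IsRightAff (f '' A) ↔ IsLeftAff A ∧ IsRightAff A := by
    obtain ⟨-, s, hs⟩ := SidedAffine.isLeftAff_or_isRightAff_iff.1 hA
    rw [SidedAffine.isLeftAff_and_isRightAff_iff, SidedAffine.isLeftAff_and_isRightAff_iff,
      image_nonempty, hflat.forall_isFlat_image_iff hinj hs]
  refine ⟨fun A hA => (two_sided_image_iff A (.inl hA.1)).2 hA, fun A hA => ?_⟩
  have image_sided := hf A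
  have image_iff := two_sided_image_iff A
  tauto
end

section
/- Let k be a division ring with no anti-automorphism, n ≥ 2, and f : k^n → k^n an injective map taking every left or right affine subspace to a left or right affine subspace. Then f takes every left affine subspace to a left affine subspace and every right affine subspace to a right affine subspace. -/
open Function Set

variable {k : Type*}

/-!
Counting leading coefficients ranks left and right subspaces on one common scale, and completing a
subspace to a chain up to `k^n` shows that the increments of `f` do not raise this rank, so they
send lines to lines. If the left and right lines of a vector `v` differ, then exactly one of the two
goes to a left line; a change of this type between base points is excluded by the planes through
`v`. Parallel lines thus go to parallel lines, and as such vectors `v` generate `k^n`, the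
increments do not depend on the base point: `f` is additive up to a translation.

The resulting additive map scales each such line through an additive bijection `σ` of scalars.
Suppose it sends left lines to right lines, say `d v ↦ h(v) σ(d)`. The hyperplane `x_i = 0` is both
a left and a right subspace, and modulo it the left multiples of `v` are right multiples. As its
image is a left or a right subspace, `σ` or its counterpart for the right multiples is
multiplicative as a map to the opposite ring, that is, an anti-automorphism. Hence all these lines
keep their sides, and comparing them yields one `σ` for all vectors, so that every left subspace
goes to a left subspace.
-/

namespace SidedGeometry

section Increment

variable {V W : Type*} [AddCommGroup V] [AddCommGroup W]

/-- The increment `x ↦ f (a + x) - f a` of `f` at the base point `a`: the map `f` read with `a` and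
`f a` as origins. -/
def increment (f : V → W) (a x : V) : W := f (a + x) - f a

theorem increment_add_left (f : V → W) (a t x : V) :
    increment f (a + t) x = increment f a (t + x) - increment f a t := by
  simp only [increment, add_assoc]
  abel

theorem increment_zero (f : V → W) (a : V) : increment f a 0 = 0 := by simp [increment]

theorem increment_injective {f : V → W} (hf : Injective f) (a : V) : Injective (increment f a) :=
  fun _ _ h ↦ add_left_cancel (hf (sub_left_injective h))

theorem image_increment_add {S T : Type*} [SetLike S V] [AddSubgroupClass S V] [SetLike T W]
    [AddSubgroupClass T W] {f : V → W} {a t : V} {P : S} {M : T}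
    (h : increment f a '' P = M) (ht : t ∈ P) : increment f (a + t) '' P = M := by
  have mem_M {x : V} (hx : x ∈ P) : increment f a x ∈ M := h.subset (mem_image_of_mem _ hx)
  ext y
  constructor
  · rintro ⟨x, hx, rfl⟩
    rw [increment_add_left]
    exact sub_mem (mem_M (add_mem ht hx)) (mem_M ht)
  · intro hy
    obtain ⟨x, hx, hxy⟩ := h.superset (add_mem hy (mem_M ht) : y + increment f a t ∈ (M : Set W))
    refine ⟨x - t, sub_mem hx ht, ?_⟩
    rw [increment_add_left, add_sub_cancel, hxy, add_sub_cancel_right]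

/-- The periods of `a ↦ increment f a v`. -/
def incrementPeriods (f : V → W) (v : V) : AddSubgroup V where
  carrier := {t | ∀ a, increment f (a + t) v = increment f a v}
  zero_mem' a := by rw [add_zero]
  add_mem' {s t} hs ht a := by rw [← add_assoc, ht, hs]
  neg_mem' {t} ht a := by rw [← ht, neg_add_cancel_right]

theorem mem_incrementPeriods {f : V → W} {t v : V} :
    t ∈ incrementPeriods f v ↔ ∀ a, increment f (a + t) v = increment f a v :=
  Iff.rfl

theorem mem_incrementPeriods_comm {f : V → W} {t v : V} :
    t ∈ incrementPeriods f v ↔ v ∈ incrementPeriods f t := by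
  refine forall_congr' fun a ↦ ?_
  rw [increment_add_left, increment_add_left, add_comm t v, sub_eq_iff_eq_add, sub_eq_iff_eq_add,
    add_comm (increment f a v)]

theorem exists_addMonoidHom_of_incrementPeriods {f : V → W}
    (hf : ∀ v, incrementPeriods f v = ⊤) : ∃ h : V →+ W, ∀ a, increment f a = h := by
  have increment_eq (a x : V) : increment f a x = increment f 0 x := by
    have ha : a ∈ incrementPeriods f x := hf x ▸ AddSubgroup.mem_top a
    rw [← mem_incrementPeriods.mp ha 0, zero_add]
  refine ⟨AddMonoidHom.mk' (increment f 0) fun x y ↦ ?_, fun a ↦ funext (increment_eq a)⟩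
  rw [← increment_eq (0 + x) y, increment_add_left, add_sub_cancel]

end Increment

section Pivots

variable {ι K : Type*} [LinearOrder ι] [AddCommGroup K]

/-- The indices of the leading coefficients of the vectors in `A`, as in the reduction to echelon
form. They do not depend on the side from which scalars act, so that their number, `pivotRank`,
measures left and right subspaces on the same scale. -/
def pivots (A : Set (ι → K)) : Set ι := {i | ∃ x ∈ A, x i ≠ 0 ∧ ∀ l < i, x l = 0}

/-- The number of pivots of `A`: the dimension of `A` if `A` is a left or a right subspace. -/
noncomputable def pivotRank (A : Set (ι → K)) : ℕ := (pivots A).ncard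

theorem pivots_mono {A B : Set (ι → K)} (h : A ⊆ B) : pivots A ⊆ pivots B :=
  fun _ ⟨x, hx, hi⟩ ↦ ⟨x, h hx, hi⟩

theorem pivotRank_zero : pivotRank ({0} : Set (ι → K)) = 0 := by
  have : pivots ({0} : Set (ι → K)) = ∅ := by
    simp [pivots]
  rw [pivotRank, this, ncard_empty]

theorem pivots_univ [Nontrivial K] : pivots (univ : Set (ι → K)) = univ := by
  obtain ⟨y, hy⟩ := exists_ne (0 : K)
  refine eq_univ_of_forall fun i ↦ ⟨Pi.single i y, mem_univ _, by simpa using hy, fun l hl ↦ ?_⟩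
  exact Pi.single_eq_of_ne (M := fun _ ↦ K) hl.ne y

variable [Finite ι]

theorem exists_leading_index {x : ι → K} (hx : x ≠ 0) : ∃ i, x i ≠ 0 ∧ ∀ l < i, x l = 0 := by
  obtain ⟨i, hi, hmin⟩ := wellFounded_lt.has_min {i | x i ≠ 0} (Function.ne_iff.mp hx)
  exact ⟨i, hi, fun l hl ↦ by_contra fun h ↦ hmin l h hl⟩

variable {D : Type*} [DivisionRing D] [Module D K]

theorem exists_smul_eq [IsSimpleModule D K] {y : K} (hy : y ≠ 0) (z : K) : ∃ d : D, d • y = z :=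
  IsSimpleModule.toSpanSingleton_surjective D hy z

theorem subset_of_pivots_subset [IsSimpleModule D K] {S : Type*} [SetLike S (ι → K)]
    [AddSubgroupClass S (ι → K)] {A : Submodule D (ι → K)} {B : S} (hAB : (A : Set (ι → K)) ⊆ B)
    (h : pivots (B : Set (ι → K)) ⊆ pivots (A : Set (ι → K))) : (B : Set (ι → K)) ⊆ A := by
  have mem_A : ∀ i, ∀ x ∈ B, x i ≠ 0 → (∀ l < i, x l = 0) → x ∈ A := by
    intro i
    induction i using WellFoundedGT.induction with
    | ind i ih =>
      intro x hx hxi hxl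
      obtain ⟨a, ha, hai, hal⟩ := h ⟨x, hx, hxi, hxl⟩
      obtain ⟨d, hd⟩ := exists_smul_eq (D := D) hai (x i)
      suffices x - d • a ∈ A by simpa using add_mem this (A.smul_mem d ha)
      by_cases hz : x - d • a = 0
      · exact hz ▸ A.zero_mem
      obtain ⟨j, hj, hjl⟩ := exists_leading_index hz
      have hij : i < j := by
        rcases lt_trichotomy i j with h | rfl | h
        · exact h
        · simp [hd] at hj
        · simp [hxl j h, hal j h] at hj
      exact ih j hij _ (sub_mem hx (hAB (A.smul_mem d ha))) hj hjl
  intro x hx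
  by_cases hx0 : x = 0
  · exact hx0 ▸ A.zero_mem
  obtain ⟨i, hi, hil⟩ := exists_leading_index hx0
  exact mem_A i x hx hi hil

theorem pivotRank_lt_of_ssubset [IsSimpleModule D K] {S : Type*} [SetLike S (ι → K)]
    [AddSubgroupClass S (ι → K)] {A : Submodule D (ι → K)} {B : S} (h : (A : Set (ι → K)) ⊂ B) :
    pivotRank (A : Set (ι → K)) < pivotRank (B : Set (ι → K)) :=
  ncard_lt_ncard ⟨pivots_mono h.subset, fun h' ↦ h.2 (subset_of_pivots_subset h.subset h')⟩

theorem pivotRank_span_singleton_sup_le (x : ι → K) (S : Submodule D (ι → K)) :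
    pivotRank ((D ∙ x ⊔ S : Submodule D (ι → K)) : Set (ι → K)) ≤
      pivotRank (S : Set (ι → K)) + 1 := by
  set T : Set (ι → K) := ((D ∙ x ⊔ S : Submodule D (ι → K)) : Set (ι → K))
  have new_pivot : (pivots T \ pivots (S : Set (ι → K))).Subsingleton := by
    refine fun i hi j hj ↦ by_contra fun hij ↦ ?_
    wlog hlt : i < j generalizing i j
    · exact this j hj i hi (Ne.symm hij) ((Ne.lt_or_gt hij).resolve_left hlt)
    obtain ⟨⟨y, hyT, hyi, hyl⟩, hiS⟩ := hi
    obtain ⟨⟨z, hzT, hzj, hzl⟩, hjS⟩ := hj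
    have hyS : y ∉ S := fun h ↦ hiS ⟨y, h, hyi, hyl⟩
    have hT : D ∙ y ⊔ S = D ∙ x ⊔ S := by
      refine ((Submodule.wcovBy_span_singleton_sup x S).eq_or_eq le_sup_right
        (sup_le ((Submodule.span_singleton_le_iff_mem y _).mpr hyT) le_sup_right)).resolve_left
        fun h ↦ hyS ?_
      exact h ▸ Submodule.mem_sup_left (Submodule.mem_span_singleton_self y)
    obtain ⟨_, hdy, s, hs, rfl⟩ := Submodule.mem_sup.mp (hT ▸ hzT : z ∈ D ∙ y ⊔ S)
    obtain ⟨d, rfl⟩ := Submodule.mem_span_singleton.mp hdy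
    have s_add : ∀ l ≤ i, d • y l + s l = 0 := fun l hl ↦ hzl l (hl.trans_lt hlt)
    have hd : d ≠ 0 := by
      rintro rfl
      exact hjS ⟨s, hs, by simpa using hzj, fun l hl ↦ by simpa using hzl l hl⟩
    refine hiS ⟨s, hs, fun hsi ↦ ?_, fun l hl ↦ by simpa [hyl l hl] using s_add l hl.le⟩
    simpa [hsi, hd, hyi] using s_add i le_rfl
  calc pivotRank T
      ≤ (pivots T \ pivots (S : Set (ι → K))).ncard + pivotRank (S : Set (ι → K)) :=
        ncard_le_ncard_sdiff_add_ncard _ _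
    _ ≤ 1 + pivotRank (S : Set (ι → K)) :=
        Nat.add_le_add_right (ncard_le_one_iff_subsingleton.mpr new_pivot) _
    _ = pivotRank (S : Set (ι → K)) + 1 := add_comm _ _

end Pivots

section SidedMaps

variable {V W : Type*} [AddCommGroup V] [AddCommGroup W]

/-- `A` is a subspace for one of the two division rings `L` and `R` acting on `V`. For `L = k` and
`R = kᵐᵒᵖ` this says that `A` is a left or a right subspace. -/
def IsSided (L R : Type*) [DivisionRing L] [DivisionRing R] [Module L V] [Module R V]
    (A : Set V) : Prop :=
  (∃ M : Submodule L V, (M : Set V) = A) ∨ ∃ M : Submodule R V, (M : Set V) = A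

theorem IsSided.exists_addSubgroup {L R : Type*} [DivisionRing L] [DivisionRing R] [Module L V]
    [Module R V] {A : Set V} (h : IsSided L R A) : ∃ H : AddSubgroup V, (H : Set V) = A := by
  obtain ⟨M, hM⟩ | ⟨M, hM⟩ := h <;> exact ⟨M.toAddSubgroup, hM⟩

/-- `g` is an injective map fixing the origin that sends every `L`- or `R`-subspace to an `L'`- or
`R'`-subspace. Left and right are parameters, so that exchanging them in the source or in the
target yields the symmetric statements. -/
structure MapsSided (L R L' R' : Type*) [DivisionRing L] [DivisionRing R] [DivisionRing L']
    [DivisionRing R'] [Module L V] [Module R V] [Module L' W] [Module R' W] (g : V → W) :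
    Prop where
  injective : Injective g
  map_zero : g 0 = 0
  isSided_image {A : Set V} : IsSided L R A → IsSided L' R' (g '' A)

/-- `g` sends the `D`-line spanned by `v` onto a `D'`-line. -/
def MapsLine (D D' : Type*) [DivisionRing D] [DivisionRing D'] [Module D V] [Module D' W]
    (g : V → W) (v : V) : Prop :=
  g '' (D ∙ v) = (D' ∙ g v : Submodule D' W)

variable {D L R : Type*} [DivisionRing D] [DivisionRing L] [DivisionRing R]
  [Module D V] [Module L V] [Module R V]
  {D' L' R' : Type*} [DivisionRing D'] [DivisionRing L'] [DivisionRing R']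
  [Module D' W] [Module L' W] [Module R' W] {f g : V → W} {a t v : V}

namespace MapsSided

theorem swap_source (h : MapsSided L R L' R' g) : MapsSided R L L' R' g :=
  ⟨h.injective, h.map_zero, fun hA ↦ h.isSided_image hA.symm⟩

theorem swap_target (h : MapsSided L R L' R' g) : MapsSided L R R' L' g :=
  ⟨h.injective, h.map_zero, fun hA ↦ (h.isSided_image hA).symm⟩

theorem ne_zero (h : MapsSided L R L' R' g) (hv : v ≠ 0) : g v ≠ 0 :=
  h.map_zero ▸ h.injective.ne hv

theorem isSided_image_left (h : MapsSided L R L' R' g) (S : Submodule L V) :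
    IsSided L' R' (g '' S) :=
  h.isSided_image (Or.inl ⟨S, rfl⟩)

end MapsSided

theorem span_singleton_smul_eq {d : D} (hd : d ≠ 0) (v : V) : D ∙ d • v = D ∙ v :=
  Submodule.span_singleton_smul_eq hd.isUnit v

theorem span_singleton_eq_of_mem {p q : V} (hq : q ∈ D ∙ p) (hq0 : q ≠ 0) : D ∙ q = D ∙ p := by
  obtain ⟨d, rfl⟩ := Submodule.mem_span_singleton.mp hq
  exact span_singleton_smul_eq (fun hd ↦ hq0 (by rw [hd, zero_smul])) p

namespace MapsLine

theorem of_image_eq {p : W} (h : g '' (D ∙ v) = (D' ∙ p : Submodule D' W)) (hv : g v ≠ 0) :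
    MapsLine D D' g v := by
  have hp : g v ∈ D' ∙ p := h.subset (mem_image_of_mem g (Submodule.mem_span_singleton_self v))
  rw [MapsLine, h, span_singleton_eq_of_mem hp hv]

theorem map_mem (h : MapsLine D D' g v) {x : V} (hx : x ∈ D ∙ v) : g x ∈ D' ∙ g v :=
  h.subset (mem_image_of_mem g hx)

theorem exists_eq (h : MapsLine D D' g v) {y : W} (hy : y ∈ D' ∙ g v) : ∃ x ∈ D ∙ v, g x = y :=
  h.superset hy

theorem smul (h : MapsLine D D' g v) {d : D} (hd : d ≠ 0) (hv : g (d • v) ≠ 0) :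
    MapsLine D D' g (d • v) :=
  of_image_eq (by rwa [span_singleton_smul_eq hd]) hv

theorem add_base (h : MapsLine D D' (increment f a) v) (hv : increment f (a + t) v ≠ 0)
    (ht : t ∈ D ∙ v) : MapsLine D D' (increment f (a + t)) v :=
  of_image_eq (image_increment_add h ht) hv

end MapsLine

end SidedMaps

section Coordinates

variable {ι K : Type*} [LinearOrder ι] [Finite ι] [AddCommGroup K]
  {L R : Type*} [DivisionRing L] [DivisionRing R] [Module L K] [Module R K]
  {L' R' : Type*} [DivisionRing L'] [DivisionRing R'] [Module L' K] [Module R' K]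
  {f g : (ι → K) → (ι → K)} {a b v : ι → K}

theorem pivotRank_span_singleton_le (v : ι → K) :
    pivotRank ((L ∙ v : Submodule L (ι → K)) : Set (ι → K)) ≤ 1 := by
  simpa [pivotRank_zero] using pivotRank_span_singleton_sup_le (D := L) v ⊥

theorem pivotRank_span_singleton_pos [IsSimpleModule L K] (hv : v ≠ 0) :
    0 < pivotRank ((L ∙ v : Submodule L (ι → K)) : Set (ι → K)) := by
  refine pivotRank_zero.symm.trans_lt (pivotRank_lt_of_ssubset (A := (⊥ : Submodule L (ι → K))) ?_)
  exact SetLike.coe_ssubset_coe.mpr (bot_lt_iff_ne_bot.mpr (by simpa using hv))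

theorem span_singleton_eq_of_pivotRank_le_one [IsSimpleModule L K] {M : Submodule L (ι → K)}
    (hvM : v ∈ M) (hv : v ≠ 0) (hM : pivotRank (M : Set (ι → K)) ≤ 1) : L ∙ v = M := by
  refine eq_of_le_of_not_lt ((Submodule.span_singleton_le_iff_mem v M).mpr hvM) fun hlt ↦ ?_
  have := pivotRank_span_singleton_pos (L := L) hv
  have := pivotRank_lt_of_ssubset (SetLike.coe_ssubset_coe.mpr hlt)
  lia

theorem IsSided.pivotRank_lt [IsSimpleModule L K] [IsSimpleModule R K] {A B : Set (ι → K)}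
    (hA : IsSided L R A) (hB : IsSided L R B) (h : A ⊂ B) : pivotRank A < pivotRank B := by
  obtain ⟨M, rfl⟩ | ⟨M, rfl⟩ := hA <;> obtain ⟨N, rfl⟩ | ⟨N, rfl⟩ := hB <;>
    exact pivotRank_lt_of_ssubset h

theorem sup_span_singleton_eq_of_pivotRank_le_two [IsSimpleModule L K] [IsSimpleModule R K]
    {A : Set (ι → K)} (hA : IsSided L R A) (hrank : pivotRank A ≤ 2) {p q : ι → K} (hp : p ≠ 0)
    (hq : q ∉ L ∙ p) (hpA : (L ∙ p : Set (ι → K)) ⊆ A) (hqA : (L ∙ q : Set (ι → K)) ⊆ A) :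
    ((L ∙ p ⊔ L ∙ q : Submodule L (ι → K)) : Set (ι → K)) = A := by
  have sup_subset : ((L ∙ p ⊔ L ∙ q : Submodule L (ι → K)) : Set (ι → K)) ⊆ A := by
    obtain ⟨H, rfl⟩ := hA.exists_addSubgroup
    intro x hx
    obtain ⟨y, hy, z, hz, rfl⟩ := Submodule.mem_sup.mp hx
    exact add_mem (hpA hy) (hqA hz)
  refine sup_subset.eq_of_not_ssubset fun hlt ↦ ?_
  have := pivotRank_span_singleton_pos (L := L) hp
  have := pivotRank_lt_of_ssubset (SetLike.coe_ssubset_coe.mpr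
    (left_lt_sup.mpr (by simpa using hq) : L ∙ p < L ∙ p ⊔ L ∙ q))
  have := IsSided.pivotRank_lt (L := L) (R := R) (Or.inl ⟨_, rfl⟩) hA hlt
  lia

variable [IsSimpleModule L K] [IsSimpleModule L' K] [IsSimpleModule R' K]

theorem MapsSided.pivotRank_image_le (hg : MapsSided L R L' R' g) (S : Submodule L (ι → K)) :
    pivotRank (g '' S) ≤ pivotRank (S : Set (ι → K)) := by
  have := IsSimpleModule.nontrivial L K
  induction S using WellFoundedGT.induction with
  | ind S ih =>
    obtain rfl | hS := eq_or_ne S ⊤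
    · rw [Submodule.top_coe, pivotRank, pivotRank, pivots_univ]
      exact ncard_le_ncard (subset_univ _)
    obtain ⟨x, hx⟩ : ∃ x, x ∉ S := by simpa [Submodule.eq_top_iff'] using hS
    have lt_sup : S < L ∙ x ⊔ S := right_lt_sup.mpr (by simpa using hx)
    have image_lt := (hg.isSided_image_left S).pivotRank_lt (hg.isSided_image_left _)
      (hg.injective.image_strictMono lt_sup)
    have := ih _ lt_sup
    have := pivotRank_span_singleton_sup_le x S
    lia

theorem MapsSided.mapsLine_or_mapsLine (hg : MapsSided L R L' R' g) (hv : v ≠ 0) :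
    MapsLine L L' g v ∨ MapsLine L R' g v := by
  have hmem : g v ∈ g '' (L ∙ v) := mem_image_of_mem g (Submodule.mem_span_singleton_self v)
  have hle : pivotRank (g '' (L ∙ v)) ≤ 1 :=
    (hg.pivotRank_image_le _).trans (pivotRank_span_singleton_le v)
  obtain ⟨M, hM⟩ | ⟨M, hM⟩ := hg.isSided_image_left (L ∙ v) <;> rw [← hM] at hmem hle
  · left
    rw [MapsLine, ← hM, span_singleton_eq_of_pivotRank_le_one hmem (hg.ne_zero hv) hle]
  · right
    rw [MapsLine, ← hM, span_singleton_eq_of_pivotRank_le_one hmem (hg.ne_zero hv) hle]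

theorem increment_mem_span (hf : ∀ a, MapsSided L R L' R' (increment f a))
    (ha : MapsLine L L' (increment f a) v) (hb : MapsLine L L' (increment f b) v) :
    increment f b v ∈ L' ∙ increment f a v := by
  obtain ⟨t, rfl⟩ : ∃ t, b = a + t := ⟨b - a, by abel⟩
  by_contra hqp
  have ht : t ∉ L ∙ v := fun ht ↦ hqp <| by
    rw [increment_add_left]
    exact sub_mem (ha.map_mem (add_mem ht (Submodule.mem_span_singleton_self v))) (ha.map_mem ht)
  have hv : v ≠ 0 := by
    rintro rfl
    simp [increment_zero] at hqp
  set S : Submodule L (ι → K) := L ∙ v ⊔ L ∙ t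
  have htS : t ∈ S := Submodule.mem_sup_right (Submodule.mem_span_singleton_self t)
  have hT := (hf a).isSided_image_left S
  have rank_le : pivotRank (increment f a '' S) ≤ 2 := by
    have := (hf a).pivotRank_image_le S
    have := pivotRank_span_singleton_sup_le v (L ∙ t)
    have := pivotRank_span_singleton_le (L := L) t
    lia
  have image_shift : increment f (a + t) '' S = increment f a '' S := by
    obtain ⟨H, hH⟩ := hT.exists_addSubgroup
    exact (image_increment_add hH.symm htS).trans hH
  have sup_eq := sup_span_singleton_eq_of_pivotRank_le_two hT rank_le ((hf a).ne_zero hv) hqp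
    (ha.symm.subset.trans (image_mono (le_sup_left (b := L ∙ t))))
    (hb.symm.subset.trans ((image_mono (le_sup_left (b := L ∙ t))).trans image_shift.subset))
  -- In a plane, the lines through `f a` and `f (a + t)` with distinct directions meet, although
  -- they are images of disjoint parallel lines.
  obtain ⟨x, hx, y, hy, hxy⟩ := Submodule.mem_sup.mp
    (sup_eq.superset (mem_image_of_mem (increment f a) htS))
  obtain ⟨x', hx', rfl⟩ := ha.exists_eq hx
  obtain ⟨y', hy', hy'y⟩ := hb.exists_eq (neg_mem hy)
  rw [increment_add_left, ← hxy, sub_eq_iff_eq_add, neg_add_cancel_comm_assoc] at hy'y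
  exact ht <| (add_mem_cancel_right hy').mp ((hf a).injective hy'y ▸ hx')

end Coordinates

section Noncentral

/-- Neither of the lines `L v` and `R v` contains the other. For `L = k`, `R = kᵐᵒᵖ` and `v` scaled
to have a coordinate `1`, this says that some coordinate of `v` is not central in `k`. -/
def Noncentral (L R : Type*) {V : Type*} [DivisionRing L] [DivisionRing R] [AddCommGroup V]
    [Module L V] [Module R V] (v : V) : Prop :=
  (∃ r : R, r • v ∉ L ∙ v) ∧ ∃ l : L, l • v ∉ R ∙ v

namespace Noncentral

variable {V : Type*} [AddCommGroup V] {L R : Type*} [DivisionRing L] [DivisionRing R] [Module L V]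
  [Module R V] {v : V}

theorem symm (hv : Noncentral L R v) : Noncentral R L v := And.symm hv

theorem ne_zero (hv : Noncentral L R v) : v ≠ 0 := by
  rintro rfl
  simp [Noncentral] at hv

theorem smul [SMulCommClass L R V] (hv : Noncentral L R v) {l : L} (hl : l ≠ 0) :
    Noncentral L R (l • v) := by
  obtain ⟨⟨r, hr⟩, m, hm⟩ := hv
  refine ⟨⟨r, fun h ↦ hr ?_⟩, l * m * l⁻¹, fun h ↦ hm ?_⟩
  · rw [span_singleton_smul_eq hl, ← smul_comm] at h
    exact ((L ∙ v).smul_mem_iff hl).mp h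
  · obtain ⟨s, hs⟩ := Submodule.mem_span_singleton.mp h
    rw [← smul_comm, smul_smul, inv_mul_cancel_right₀ hl, mul_smul] at hs
    exact Submodule.mem_span_singleton.mpr ⟨s, smul_right_injective V hl hs⟩

end Noncentral

theorem MapsLine.not_both_sides {V W L R D : Type*} [AddCommGroup V] [AddCommGroup W]
    [DivisionRing L] [DivisionRing R] [DivisionRing D] [Module L V] [Module R V] [Module D W]
    {g : V → W} {v : V} (hg : Injective g) (hv : Noncentral L R v) (h : MapsLine L D g v) :
    ¬ MapsLine R D g v := by
  intro h'
  obtain ⟨⟨r, hr⟩, -⟩ := hv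
  have : g (r • v) ∈ g '' (L ∙ v) := by
    rw [h, ← h']
    exact mem_image_of_mem g (Submodule.smul_mem _ r (Submodule.mem_span_singleton_self v))
  exact hr (hg.mem_set_image.mp this)

variable {ι K : Type*} [LinearOrder ι] [Finite ι] [AddCommGroup K]
  {L R : Type*} [DivisionRing L] [DivisionRing R] [Module L K] [Module R K] [IsSimpleModule R K]
  {L' R' : Type*} [DivisionRing L'] [DivisionRing R'] [Module L' K] [Module R' K]
  [IsSimpleModule L' K] [IsSimpleModule R' K] {f g : (ι → K) → (ι → K)} {a t v : ι → K}

namespace MapsLine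

theorem other_side (hg : MapsSided L R L' R' g) (hv : Noncentral L R v) (h : MapsLine L L' g v) :
    MapsLine R R' g v :=
  (hg.swap_source.swap_target.mapsLine_or_mapsLine hv.ne_zero).resolve_right
    (h.not_both_sides hg.injective hv)

theorem not_swap (hg : MapsSided L R L' R' g) (hv : Noncentral L R v) (h : MapsLine L L' g v) :
    ¬ MapsLine L R' g v :=
  fun h' ↦ h'.not_both_sides hg.injective hv (h.other_side hg hv)

variable [IsSimpleModule L K]

theorem smul_other_side [SMulCommClass L R K] (hg : MapsSided L R L' R' g)
    (hv : Noncentral L R v) (h : MapsLine L L' g v) {r : R} (hr : r ≠ 0) :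
    MapsLine L L' g (r • v) := by
  have := SMulCommClass.symm L R K
  have hrv : Noncentral R L (r • v) := hv.symm.smul hr
  exact ((h.other_side hg hv).smul hr (hg.ne_zero hrv.ne_zero)).other_side
    hg.swap_source.swap_target hrv

theorem of_smul_notMem (hg : MapsSided L R L' R' g) (hv : Noncentral L R v)
    {P : Submodule L (ι → K)} {M : Submodule L' (ι → K)} (hM : g '' P = M) (hvP : v ∈ P) {r : R}
    (hr : r • v ∉ P) : MapsLine L L' g v := by
  refine (hg.mapsLine_or_mapsLine hv.ne_zero).resolve_right fun h ↦ ?_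
  have h' : MapsLine R L' g v := h.other_side hg.swap_target hv
  refine hr ((hg.injective.mem_set_image (s := P)).mp ?_)
  rw [hM]
  exact (Submodule.span_singleton_le_iff_mem _ M).mpr (hM.subset (mem_image_of_mem g hvP))
    (h'.map_mem (Submodule.mem_span_singleton.mpr ⟨r, rfl⟩))

theorem add_base_of_mem [SMulCommClass L R K] (hf : ∀ a, MapsSided L R L' R' (increment f a))
    (hv : Noncentral L R v) (h : MapsLine L L' (increment f a) v) {r : R} (hr : r ≠ 0)
    (ht : t ∈ L ∙ v ⊔ L ∙ r • v) : MapsLine L L' (increment f (a + t)) v := by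
  have := SMulCommClass.symm L R K
  have hrv : Noncentral L R (r • v) := (hv.symm.smul hr).symm
  obtain ⟨x, hx, y, hy, rfl⟩ := Submodule.mem_sup.mp ht
  have at_x := h.add_base ((hf _).ne_zero hv.ne_zero) hx
  have at_xy := (at_x.smul_other_side (hf _) hv hr).add_base ((hf _).ne_zero hrv.ne_zero) hy
  simpa [smul_smul, hr, add_assoc] using at_xy.smul_other_side (hf _) hrv (inv_ne_zero hr)

theorem add_base_of_notMem (hf : ∀ a, MapsSided L R L' R' (increment f a))
    (hv : Noncentral L R v) (h : MapsLine L L' (increment f a) v) {r : R} (hr : r • v ∉ L ∙ v)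
    (ht : t ∉ L ∙ v ⊔ L ∙ r • v) : MapsLine L L' (increment f (a + t)) v := by
  set P : Submodule L (ι → K) := L ∙ v ⊔ L ∙ t
  have hvP : v ∈ P := Submodule.mem_sup_left (Submodule.mem_span_singleton_self v)
  have htP : t ∈ P := Submodule.mem_sup_right (Submodule.mem_span_singleton_self t)
  have hrP : r • v ∉ P := by
    simp only [P, ← Submodule.span_insert, Set.pair_comm v] at ht ⊢
    exact fun h ↦ ht (mem_span_insert_exchange h hr)
  obtain ⟨M, hM⟩ | ⟨M, hM⟩ := (hf a).isSided_image_left P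
  · exact of_smul_notMem (hf _) hv (image_increment_add hM.symm htP) hvP hrP
  · exact absurd (of_smul_notMem (hf a).swap_target hv hM.symm hvP hrP) (h.not_swap (hf a) hv)

theorem increment_congr [SMulCommClass L R K] (hf : ∀ a, MapsSided L R L' R' (increment f a))
    (hv : Noncentral L R v) (h : MapsLine L L' (increment f a) v) (b : ι → K) :
    MapsLine L L' (increment f b) v := by
  obtain ⟨r, hr⟩ := hv.1
  obtain ⟨t, rfl⟩ : ∃ t, b = a + t := ⟨b - a, by abel⟩
  by_cases ht : t ∈ L ∙ v ⊔ L ∙ r • v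
  · refine h.add_base_of_mem hf hv ?_ ht
    rintro rfl
    simp at hr
  · exact h.add_base_of_notMem hf hv hr ht

end MapsLine

end Noncentral

section Additivity

variable {ι K : Type*} [LinearOrder ι] [Finite ι] [AddCommGroup K]
  {L R : Type*} [DivisionRing L] [DivisionRing R] [Module L K] [Module R K]
  [IsSimpleModule L K] [IsSimpleModule R K] [SMulCommClass L R K]
  {L' R' : Type*} [DivisionRing L'] [DivisionRing R'] [Module L' K] [Module R' K]
  [IsSimpleModule L' K] [IsSimpleModule R' K] {f : (ι → K) → (ι → K)} {v w : ι → K}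

theorem increment_sub_mem_image (hf : ∀ a, MapsSided L R L' R' (increment f a))
    (hv : Noncentral L R v) (a b : ι → K) :
    increment f b v - increment f a v ∈ increment f a '' (L ∙ v) := by
  obtain h | h := (hf a).mapsLine_or_mapsLine hv.ne_zero <;> rw [h]
  · exact sub_mem (increment_mem_span hf h (h.increment_congr hf hv b))
      (Submodule.mem_span_singleton_self _)
  · have hf' a := (hf a).swap_target
    exact sub_mem (increment_mem_span hf' h (h.increment_congr hf' hv b))
      (Submodule.mem_span_singleton_self _)

theorem mem_incrementPeriods_of_notMem (hf : ∀ a, MapsSided L R L' R' (increment f a))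
    (hv : Noncentral L R v) (hw : Noncentral L R w) (hwv : w ∉ L ∙ v) :
    w ∈ incrementPeriods f v := by
  refine mem_incrementPeriods.mpr fun a ↦ ?_
  have parallelogram : increment f (a + w) v - increment f a v =
      increment f (a + v) w - increment f a w := by
    rw [increment_add_left, increment_add_left, add_comm v w]
    abel
  obtain ⟨x, hx, hxv⟩ := increment_sub_mem_image hf hv a (a + w)
  obtain ⟨y, hy, hyw⟩ := increment_sub_mem_image hf hw a (a + v)
  obtain rfl : x = y := (hf a).injective (by rw [hxv, hyw, parallelogram])
  have hx0 : x = 0 := by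
    by_contra h
    exact hwv (span_singleton_eq_of_mem hx h ▸ span_singleton_eq_of_mem hy h ▸
      Submodule.mem_span_singleton_self w)
  rw [← sub_eq_zero, ← hxv, hx0, (hf a).map_zero]

theorem mem_incrementPeriods_of_noncentral (hf : ∀ a, MapsSided L R L' R' (increment f a))
    (hv : Noncentral L R v) (hw : Noncentral L R w) : w ∈ incrementPeriods f v := by
  by_cases hwv : w ∈ L ∙ v
  swap
  · exact mem_incrementPeriods_of_notMem hf hv hw hwv
  -- `w` is the difference of `(r + 1) • w` and `r • w`, neither of which lies on the line `L v`.
  obtain ⟨r, hr⟩ := hw.1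
  rw [span_singleton_eq_of_mem hwv hw.ne_zero] at hr
  have smul_mem {s : R} (hs : s • w ∉ L ∙ v) : s • w ∈ incrementPeriods f v := by
    have := SMulCommClass.symm L R K
    refine mem_incrementPeriods_of_notMem hf hv (hw.symm.smul ?_).symm hs
    rintro rfl
    simp at hs
  have hr1 : (r + 1) • w ∉ L ∙ v := by
    rwa [add_smul, one_smul, add_mem_cancel_right hwv]
  simpa [add_smul] using sub_mem (smul_mem hr1) (smul_mem hr)

theorem exists_addMonoidHom (hf : ∀ a, MapsSided L R L' R' (increment f a))
    (hgen : AddSubgroup.closure {v : ι → K | Noncentral L R v} = ⊤) :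
    ∃ h : (ι → K) →+ (ι → K), ∀ a, increment f a = h := by
  have eq_top {v : ι → K} (h : ∀ w, Noncentral L R w → w ∈ incrementPeriods f v) :
      incrementPeriods f v = ⊤ :=
    top_unique (hgen ▸ (AddSubgroup.closure_le _).mpr h)
  refine exists_addMonoidHom_of_incrementPeriods fun v ↦ eq_top fun w hw ↦ ?_
  rw [mem_incrementPeriods_comm, eq_top fun u hu ↦ mem_incrementPeriods_of_noncentral hf hw hu]
  exact AddSubgroup.mem_top v

end Additivity

section AdditiveMaps

variable {V W : Type*} [AddCommGroup V] [AddCommGroup W] {D D' : Type*} [DivisionRing D]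
  [DivisionRing D'] [Module D V] [Module D' W] {h : V →+ W} {σ : D → D'} {u v w : V}

/-- The vectors on whose multiples `h` is semilinear with respect to the map `σ` of scalars. -/
def scaledBy (h : V →+ W) (σ : D → D') : AddSubgroup V where
  carrier := {x | ∀ c, h (c • x) = σ c • h x}
  zero_mem' c := by simp
  add_mem' {x y} hx hy c := by rw [smul_add, map_add, hx, hy, map_add, smul_add]
  neg_mem' {x} hx c := by rw [smul_neg, map_neg, hx, map_neg, smul_neg]

theorem mem_scaledBy : v ∈ scaledBy h σ ↔ ∀ c, h (c • v) = σ c • h v :=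
  Iff.rfl

theorem MapsLine.exists_map_smul (hv : MapsLine D D' h v) (c : D) :
    ∃ c' : D', h (c • v) = c' • h v := by
  obtain ⟨c', hc'⟩ := Submodule.mem_span_singleton.mp
    (hv.map_mem (Submodule.smul_mem _ c (Submodule.mem_span_singleton_self v)))
  exact ⟨c', hc'.symm⟩

theorem MapsLine.exists_addEquiv (hh : Injective h) (hv : MapsLine D D' h v) (hv0 : v ≠ 0) :
    ∃ σ : D ≃+ D', v ∈ scaledBy h σ := by
  have hhv : h v ≠ 0 := (map_ne_zero_iff h hh).mpr hv0
  choose σ hσ using hv.exists_map_smul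
  let σ' : D →+ D' := AddMonoidHom.mk' σ fun c d ↦ smul_left_injective D' hhv <| by
    simp only [add_smul, ← hσ, map_add]
  refine ⟨AddEquiv.ofBijective σ' ⟨fun c d hcd ↦ ?_, fun c' ↦ ?_⟩, hσ⟩
  · refine smul_left_injective D hv0 (hh ?_)
    exact (hσ c).trans ((congrArg (· • h v) hcd).trans (hσ d).symm)
  · obtain ⟨x, hx, hxc⟩ :=
      hv.exists_eq (Submodule.smul_mem _ c' (Submodule.mem_span_singleton_self _))
    obtain ⟨c, rfl⟩ := Submodule.mem_span_singleton.mp hx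
    exact ⟨c, smul_left_injective D' hhv ((hσ c).symm.trans hxc)⟩

theorem mem_scaledBy_of_mapsLine_add (hh : Injective h) (hu0 : u ≠ 0) (hu : u ∈ scaledBy h σ)
    (hwu : w ∉ D ∙ u) (lineu : MapsLine D D' h u) (linew : MapsLine D D' h w)
    (lineuw : MapsLine D D' h (u + w)) : w ∈ scaledBy h σ := by
  refine mem_scaledBy.mpr fun c ↦ ?_
  obtain ⟨d, hd⟩ := linew.exists_map_smul c
  obtain ⟨e, he⟩ := lineuw.exists_map_smul c
  have hhw : h w ∉ D' ∙ h u := by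
    rw [← SetLike.mem_coe, ← lineu]
    exact fun hmem ↦ hwu (hh.mem_set_image.mp hmem)
  have key : (e - d) • h w = (σ c - e) • h u := by
    rw [smul_add, map_add, map_add, hd, mem_scaledBy.mp hu, smul_add] at he
    rw [sub_smul, sub_smul, sub_eq_sub_iff_add_eq_add, add_comm, ← he]
  have hed : e = d := by
    by_contra hne
    refine hhw (((D' ∙ h u).smul_mem_iff (sub_ne_zero.mpr hne)).mp ?_)
    exact key ▸ Submodule.smul_mem _ _ (Submodule.mem_span_singleton_self _)
  rw [hed, sub_self, zero_smul, eq_comm,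
    smul_eq_zero_iff_left ((map_ne_zero_iff h hh).mpr hu0), sub_eq_zero] at key
  rw [hd, key]

theorem map_mul_of_exists_smul_sub_smul_mem {E : Type*} [DivisionRing E] [Module E V]
    (hh : Injective h) {N : Submodule D V} {N' : Submodule D' W} (hN : h '' N = N') (hvN : v ∉ N)
    (hv : v ∈ scaledBy h σ) (hev : ∀ e : E, e • v ∈ scaledBy h σ)
    (hDE : ∀ d : D, ∃ e : E, d • v - e • v ∈ N) (c d : D) : σ (c * d) = σ c * σ d := by
  obtain ⟨e, he⟩ := hDE d
  have map_mem {x : V} (hx : x ∈ N) : h x ∈ N' := hN.subset (mem_image_of_mem h hx)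
  have mem_N' : (σ (c * d) - σ c * σ d) • h v ∈ N' := by
    have h₁ : σ (c * d) • h v - σ c • h (e • v) ∈ N' := by
      have := map_mem (N.smul_mem c he)
      rwa [smul_sub, map_sub, smul_smul, hv, hev] at this
    have h₂ : σ c • σ d • h v - σ c • h (e • v) ∈ N' := by
      have := N'.smul_mem (σ c) (map_mem he)
      rwa [map_sub, hv, smul_sub] at this
    simpa [sub_smul, mul_smul] using sub_mem h₁ h₂
  by_contra hne
  refine hvN (hh.mem_set_image.mp ?_)
  rw [hN]
  exact (N'.smul_mem_iff (sub_ne_zero.mpr hne)).mp mem_N'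

theorem exists_submodule_eq_image_of_scaledBy (hσ : Surjective σ) (htop : scaledBy h σ = ⊤)
    (S : Submodule D V) : ∃ S' : Submodule D' W, (S' : Set W) = h '' S := by
  refine ⟨{ S.toAddSubgroup.map h with smul_mem' := ?_ }, rfl⟩
  rintro c' _ ⟨x, hx, rfl⟩
  obtain ⟨c, rfl⟩ := hσ c'
  have hx' : x ∈ scaledBy h σ := htop ▸ AddSubgroup.mem_top x
  exact ⟨c • x, S.smul_mem c hx, hx' c⟩

end AdditiveMaps

section RingEquiv

variable {ι K : Type*} [LinearOrder ι] [Finite ι] [AddCommGroup K]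
  {L R : Type*} [DivisionRing L] [DivisionRing R] [Module L K] [Module R K]
  [IsSimpleModule L K] [IsSimpleModule R K] [SMulCommClass L R K]
  {L' R' : Type*} [DivisionRing L'] [DivisionRing R'] [Module L' K] [Module R' K]
  [IsSimpleModule L' K] [IsSimpleModule R' K] {h : (ι → K) →+ (ι → K)} {v : ι → K}

theorem smul_mem_scaledBy (hg : MapsSided L R L' R' h) (hv : Noncentral L R v)
    (line : MapsLine L L' h v) {σ : L → L'} (hσ : v ∈ scaledBy h σ) (r : R) :
    r • v ∈ scaledBy h σ := by
  have smul_mem_of_notMem {s : R} (hs : s • v ∉ L ∙ v) : s • v ∈ scaledBy h σ := by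
    have line_smul {r : R} (hr : r • v ∉ L ∙ v) : MapsLine L L' h (r • v) :=
      line.smul_other_side hg hv (by rintro rfl; simp at hr)
    refine mem_scaledBy_of_mapsLine_add hg.injective hv.ne_zero hσ hs line (line_smul hs) ?_
    have hs1 : (1 + s) • v ∉ L ∙ v := by
      rwa [add_smul, one_smul, add_mem_cancel_left (Submodule.mem_span_singleton_self v)]
    simpa [add_smul] using line_smul hs1
  by_cases hr : r • v ∈ L ∙ v
  · obtain ⟨s, hs⟩ := hv.1
    have hrs : (r + s) • v ∉ L ∙ v := by rwa [add_smul, add_mem_cancel_left hr]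
    simpa [add_smul] using sub_mem (smul_mem_of_notMem hrs) (smul_mem_of_notMem hs)
  · exact smul_mem_of_notMem hr

theorem MapsLine.nonempty_ringEquiv (hg : MapsSided L R L' R' h) (hv : Noncentral L R v)
    (line : MapsLine L L' h v) {i : ι} (hi : v i ≠ 0) {N' : Submodule L' (ι → K)}
    (hN' : h '' {x | x i = 0} = N') : Nonempty (L ≃+* L') := by
  obtain ⟨σ, hσ⟩ := line.exists_addEquiv hg.injective hv.ne_zero
  have map_mul := map_mul_of_exists_smul_sub_smul_mem hg.injective
    (N := LinearMap.ker (LinearMap.proj i : (ι → K) →ₗ[L] K)) hN' (by simpa using hi) hσ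
    (smul_mem_scaledBy hg hv line hσ) fun d ↦ by
      obtain ⟨e, he⟩ := exists_smul_eq (D := R) hi (d • v i)
      exact ⟨e, by simp [he]⟩
  exact ⟨{ σ with map_mul' := map_mul }⟩

theorem MapsLine.nonempty_ringEquiv_or (hg : MapsSided L R L' R' h) (hv : Noncentral L R v)
    (line : MapsLine L L' h v) : Nonempty (L ≃+* L') ∨ Nonempty (R ≃+* R') := by
  obtain ⟨i, hi⟩ := Function.ne_iff.mp hv.ne_zero
  obtain ⟨N', hN'⟩ | ⟨N', hN'⟩ :=
    hg.isSided_image_left (LinearMap.ker (LinearMap.proj i : (ι → K) →ₗ[L] K))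
  · exact Or.inl (line.nonempty_ringEquiv hg hv hi hN'.symm)
  · have := SMulCommClass.symm L R K
    exact Or.inr ((line.other_side hg hv).nonempty_ringEquiv hg.swap_source.swap_target hv.symm hi
      hN'.symm)

end RingEquiv

section ExistsNoncentral

variable {ι K : Type*} [AddCommGroup K]
  {L R : Type*} [DivisionRing L] [DivisionRing R] [Module L K] [Module R K]
  {l : L} {r : R} {i j : ι} {o m : K}

theorem noncentral_of_smul_ne_smul {v : ι → K} (hi0 : v i ≠ 0) (hi : l • v i = r • v i)
    (hj : l • v j ≠ r • v j) : Noncentral L R v := by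
  refine ⟨⟨r, fun hr ↦ ?_⟩, l, fun hl ↦ ?_⟩
  · obtain ⟨d, hd⟩ := Submodule.mem_span_singleton.mp hr
    obtain rfl : d = l := smul_left_injective L hi0 ((congrFun hd i).trans hi.symm)
    exact hj (congrFun hd j)
  · obtain ⟨d, hd⟩ := Submodule.mem_span_singleton.mp hl
    obtain rfl : d = r := smul_left_injective R hi0 ((congrFun hd i).trans hi)
    exact hj (congrFun hd j).symm

variable [DecidableEq ι]

theorem noncentral_single_add_single (hij : i ≠ j) (ho : o ≠ 0) (hlr : l • o = r • o)
    (hm : l • m ≠ r • m) : Noncentral L R (Pi.single i o + Pi.single j m : ι → K) :=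
  noncentral_of_smul_ne_smul (i := i) (j := j) (l := l) (r := r)
    (by simpa [hij] using ho) (by simpa [hij] using hlr) (by simpa [hij.symm] using hm)

theorem eq_top_of_single_mem [Finite ι] {H : AddSubgroup (ι → K)} (hH : ∀ i y, Pi.single i y ∈ H) :
    H = ⊤ := by
  have := Fintype.ofFinite ι
  exact (AddSubgroup.eq_top_iff' H).mpr fun x ↦
    Finset.univ_sum_single x ▸ sum_mem fun i _ ↦ hH i (x i)

theorem ne_zero_of_smul_ne_smul (ho : o ≠ 0) (hlr : l • o = r • o) (hm : l • m ≠ r • m) :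
    r ≠ 0 := by
  rintro rfl
  obtain rfl : l = 0 := (smul_eq_zero_iff_left ho).mp (by rw [hlr, zero_smul])
  simp at hm

theorem exists_smul_ne_smul_add (ho : o ≠ 0) (hlr : l • o = r • o) (hm : l • m ≠ r • m) :
    ∃ (l' : L) (r' : R), l' • o = r' • o ∧ l' • m ≠ r' • m ∧ r' • m ≠ l' • (m + o) := by
  by_cases h : r • m = l • (m + o)
  · refine ⟨l + 1, r + 1, by simp [add_smul, hlr], by simpa [add_smul] using hm, fun h' ↦ ho ?_⟩
    rw [add_smul, add_smul, one_smul, one_smul, h] at h'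
    simpa using add_left_cancel h'
  · exact ⟨l, r, hlr, hm, h⟩

theorem noncentral_smul_add_single [SMulCommClass L R K] (hij : i ≠ j) (ho : o ≠ 0)
    (hlr : l • o = r • o) (hm : l • m ≠ r • m) :
    Noncentral L R (r • (Pi.single i o + Pi.single j m) +
      (Pi.single i o + Pi.single j (m + o)) : ι → K) := by
  have hlr1 : (l + 1) • o = (r + 1) • o := by simpa [add_smul] using hlr
  have hm1 : (l + 1) • m ≠ (r + 1) • m := by simpa [add_smul] using hm
  have hr1 : r + 1 ≠ 0 := ne_zero_of_smul_ne_smul ho hlr1 hm1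
  have key : (Pi.single i ((r + 1) • o) + Pi.single j ((r + 1) • m + o) : ι → K) =
      r • (Pi.single i o + Pi.single j m) + (Pi.single i o + Pi.single j (m + o)) := by
    simp only [add_smul, one_smul, smul_add, Pi.single_add, Pi.single_smul]
    abel
  rw [← key]
  refine noncentral_single_add_single hij (smul_ne_zero hr1 ho) (l := l + 1) (r := r + 1) ?_ ?_
  · rw [smul_comm, hlr1]
  · rw [smul_add, smul_add, smul_comm, hlr1]
    exact fun h ↦ hm1 (smul_right_injective K hr1 (add_right_cancel h))

theorem single_add_single_notMem_span (hij : i ≠ j) (ho : o ≠ 0) (hlr : l • o = r • o)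
    (hrm : r • m ≠ l • (m + o)) :
    (Pi.single i o + Pi.single j (m + o) : ι → K) ∉
      L ∙ r • (Pi.single i o + Pi.single j m : ι → K) := by
  intro hmem
  obtain ⟨t, ht⟩ := Submodule.mem_span_singleton.mp hmem
  have hi : t • r • o = o := by simpa [hij] using congrFun ht i
  have hj : t • r • m = m + o := by simpa [hij.symm] using congrFun ht j
  have htl : t * l = 1 := smul_left_injective L ho (by simp [mul_smul, hlr, hi])
  rw [← hj, smul_smul, mul_eq_one_comm.mp htl, one_smul] at hrm
  exact hrm rfl

end ExistsNoncentral

theorem closure_noncentral_eq_top {ι K L R : Type*} [Finite ι] [Nontrivial ι] [AddCommGroup K]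
    [DivisionRing L] [DivisionRing R] [Module L K] [Module R K] [IsSimpleModule R K]
    [SMulCommClass L R K] {l : L} {r : R} {o m : K} (ho : o ≠ 0) (hlr : l • o = r • o)
    (hm : l • m ≠ r • m) : AddSubgroup.closure {v : ι → K | Noncentral L R v} = ⊤ := by
  classical
  refine eq_top_of_single_mem fun j y ↦ ?_
  obtain ⟨i, hij⟩ := exists_ne j
  obtain ⟨s, rfl⟩ := exists_smul_eq (D := R) ho y
  obtain rfl | hs := eq_or_ne s 0
  · simp
  have smul_mem {n : K} (hn : l • n ≠ r • n) :
      s • (Pi.single i o + Pi.single j n : ι → K) ∈ AddSubgroup.closure {v | Noncentral L R v} := by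
    have := SMulCommClass.symm L R K
    exact AddSubgroup.subset_closure
      ((noncentral_single_add_single hij ho hlr hn).symm.smul hs).symm
  have hmo : l • (m + o) ≠ r • (m + o) := by
    simpa [smul_add, hlr] using hm
  convert sub_mem (smul_mem hmo) (smul_mem hm) using 1
  simp [Pi.single_add, Pi.single_smul]

section Semilinear

variable {ι K : Type*} [LinearOrder ι] [Finite ι] [AddCommGroup K]
  {L R : Type*} [DivisionRing L] [DivisionRing R] [Module L K] [Module R K]
  [IsSimpleModule L K] [IsSimpleModule R K] [SMulCommClass L R K]
  {L' R' : Type*} [DivisionRing L'] [DivisionRing R'] [Module L' K] [Module R' K]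
  [IsSimpleModule L' K] [IsSimpleModule R' K] {h : (ι → K) →+ (ι → K)}
  {l : L} {r : R} {i j : ι} {o m : K}

theorem exists_single_mem_scaledBy (hg : MapsSided L R L' R' h)
    (lines : ∀ v, Noncentral L R v → MapsLine L L' h v) (hij : i ≠ j) (ho : o ≠ 0)
    (hlr : l • o = r • o) (hm : l • m ≠ r • m) :
    ∃ σ : L ≃+ L', ∀ y, Pi.single i y ∈ scaledBy h σ ∧ Pi.single j y ∈ scaledBy h σ := by
  obtain ⟨l, r, hlr, hm, hrm⟩ := exists_smul_ne_smul_add ho hlr hm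
  set v : ι → K := Pi.single i o + Pi.single j m
  set w : ι → K := Pi.single i o + Pi.single j (m + o)
  have hv : Noncentral L R v := noncentral_single_add_single hij ho hlr hm
  have hw : Noncentral L R w := noncentral_single_add_single hij ho hlr (by simpa [hlr] using hm)
  have hrv : Noncentral L R (r • v) := by
    have := SMulCommClass.symm L R K
    exact (hv.symm.smul (ne_zero_of_smul_ne_smul ho hlr hm)).symm
  obtain ⟨σ, hσv⟩ := (lines v hv).exists_addEquiv hg.injective hv.ne_zero
  have hσw : w ∈ scaledBy h σ := mem_scaledBy_of_mapsLine_add hg.injective hrv.ne_zero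
    (smul_mem_scaledBy hg hv (lines v hv) hσv r)
    (single_add_single_notMem_span hij ho hlr hrm) (lines _ hrv) (lines w hw)
    (lines _ (noncentral_smul_add_single hij ho hlr hm))
  have single_mem (y : K) : Pi.single j y ∈ scaledBy h σ := by
    obtain ⟨s, rfl⟩ := exists_smul_eq (D := R) ho y
    convert sub_mem (smul_mem_scaledBy hg hw (lines w hw) hσw s)
      (smul_mem_scaledBy hg hv (lines v hv) hσv s) using 1
    simp [v, w, Pi.single_add, Pi.single_smul]
  refine ⟨σ, fun y ↦ ⟨?_, single_mem y⟩⟩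
  obtain ⟨s, rfl⟩ := exists_smul_eq (D := R) ho y
  convert sub_mem (smul_mem_scaledBy hg hv (lines v hv) hσv s) (single_mem (s • m)) using 1
  simp [v, Pi.single_smul]

theorem exists_scaledBy_eq_top [Nontrivial ι] (hg : MapsSided L R L' R' h)
    (lines : ∀ v, Noncentral L R v → MapsLine L L' h v) (ho : o ≠ 0)
    (hlr : l • o = r • o) (hm : l • m ≠ r • m) : ∃ σ : L ≃+ L', scaledBy h σ = ⊤ := by
  obtain ⟨i, j, hij⟩ := exists_pair_ne ι
  have exists_mem {j : ι} (hij : i ≠ j) := exists_single_mem_scaledBy hg lines hij ho hlr hm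
  obtain ⟨σ, hσ⟩ := exists_mem hij
  refine ⟨σ, eq_top_of_single_mem fun j y ↦ ?_⟩
  obtain rfl | hij := eq_or_ne i j
  · exact (hσ y).1
  obtain ⟨τ, hτ⟩ := exists_mem hij
  have hi : h (Pi.single i o) ≠ 0 := hg.ne_zero (by simpa using ho)
  have : τ = σ := AddEquiv.ext fun c ↦ smul_left_injective L' hi <|
    ((hτ o).1 c).symm.trans ((hσ o).1 c)
  exact this ▸ (hτ y).2

theorem MapsSided.mapsLine_of_noncentral (hg : MapsSided L R L' R' h)
    (hL : IsEmpty (L ≃+* R')) (hR : IsEmpty (R ≃+* L')) {v : ι → K} (hv : Noncentral L R v) :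
    MapsLine L L' h v := by
  refine (hg.mapsLine_or_mapsLine hv.ne_zero).resolve_right fun line ↦ ?_
  exact (line.nonempty_ringEquiv_or hg.swap_target hv).elim (not_nonempty_iff.mpr hL)
    (not_nonempty_iff.mpr hR)

theorem exists_submodule_eq_image_increment [Nontrivial ι] {f : (ι → K) → (ι → K)}
    (hf : ∀ a, MapsSided L R L' R' (increment f a)) (hL : IsEmpty (L ≃+* R'))
    (hR : IsEmpty (R ≃+* L')) (ho : o ≠ 0) (hlr : l • o = r • o) (hm : l • m ≠ r • m)
    (a : ι → K) (S : Submodule L (ι → K)) :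
    ∃ S' : Submodule L' (ι → K), (S' : Set (ι → K)) = increment f a '' S := by
  obtain ⟨h, hh⟩ := exists_addMonoidHom hf (closure_noncentral_eq_top ho hlr hm)
  have hg : MapsSided L R L' R' h := hh 0 ▸ hf 0
  obtain ⟨σ, hσ⟩ :=
    exists_scaledBy_eq_top hg (fun v ↦ hg.mapsLine_of_noncentral hL hR) ho hlr hm
  exact hh a ▸ exists_submodule_eq_image_of_scaledBy σ.surjective hσ S

end Semilinear

section Affine

/-- `A` is a translate of a `D`-submodule. -/
def IsAffine (D : Type*) {V : Type*} [DivisionRing D] [AddCommGroup V] [Module D V] (A : Set V) :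
    Prop :=
  ∃ (v : V) (S : Submodule D V), A = (v + ·) '' (S : Set V)

variable {V W D D' : Type*} [AddCommGroup V] [AddCommGroup W] [DivisionRing D] [DivisionRing D']
  [Module D V] [Module D' W] {f : V → W}

theorem image_image_add_left (f : V → W) (a : V) (A : Set V) :
    f '' ((a + ·) '' A) = (f a + ·) '' (increment f a '' A) := by
  simp only [image_image, increment, add_sub_cancel]

theorem IsAffine.image (hf : ∀ a (S : Submodule D V),
    ∃ S' : Submodule D' W, (S' : Set W) = increment f a '' S) {A : Set V} (hA : IsAffine D A) :
    IsAffine D' (f '' A) := by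
  obtain ⟨a, S, rfl⟩ := hA
  obtain ⟨S', hS'⟩ := hf a S
  exact ⟨f a, S', by rw [image_image_add_left, hS']⟩

open Pointwise in
theorem exists_submodule_eq_of_isAffine {B : Set V} {w : V} (hB : IsAffine D ((w + ·) '' B))
    (h0 : 0 ∈ B) : ∃ S : Submodule D V, (S : Set V) = B := by
  obtain ⟨v, S, hS⟩ := hB
  obtain ⟨s, hs, hsw⟩ := hS.subset (mem_image_of_mem _ h0)
  obtain rfl : v + s = w := hsw.trans (add_zero w)
  have shift : ((v + s) + ·) '' (S : Set V) = (v + ·) '' S :=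
    (add_vadd v s (S : Set V)).trans (congrArg (v +ᵥ ·) (vadd_coe_set hs))
  exact ⟨S, image_injective.mpr (add_right_injective (v + s)) (shift.trans hS.symm)⟩

theorem mapsSided_increment {L R L' R' : Type*} [DivisionRing L] [DivisionRing R]
    [DivisionRing L'] [DivisionRing R'] [Module L V] [Module R V] [Module L' W] [Module R' W]
    (hinj : Injective f) (hf : ∀ A : Set V, IsAffine L A ∨ IsAffine R A →
      IsAffine L' (f '' A) ∨ IsAffine R' (f '' A)) (a : V) :
    MapsSided L R L' R' (increment f a) where
  injective := increment_injective hinj a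
  map_zero := increment_zero f a
  isSided_image {A} hA := by
    have h0 : 0 ∈ increment f a '' A := by
      refine ⟨0, ?_, increment_zero f a⟩
      obtain ⟨H, rfl⟩ := hA.exists_addSubgroup
      exact H.zero_mem
    have affine : IsAffine L ((a + ·) '' A) ∨ IsAffine R ((a + ·) '' A) := by
      refine hA.imp ?_ ?_ <;> rintro ⟨M, rfl⟩ <;> exact ⟨a, M, rfl⟩
    have := hf _ affine
    rw [image_image_add_left] at this
    exact this.imp (exists_submodule_eq_of_isAffine · h0) (exists_submodule_eq_of_isAffine · h0)

end Affine

section DivisionRing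

variable [DivisionRing k]

instance : IsSimpleModule kᵐᵒᵖ k :=
  isSimpleModule_iff_toSpanSingleton_surjective.mpr
    ⟨inferInstance, fun x hx y ↦ ⟨MulOpposite.op (x⁻¹ * y), mul_inv_cancel_left₀ hx y⟩⟩

theorem isEmpty_ringEquiv_mulOpposite (hanti : ¬ ∃ α : k → k, Bijective α ∧
    (∀ a b : k, α (a + b) = α a + α b) ∧ ∀ a b : k, α (a * b) = α b * α a) :
    IsEmpty (k ≃+* kᵐᵒᵖ) :=
  ⟨fun e ↦ hanti ⟨fun a ↦ (e a).unop, MulOpposite.unop_bijective.comp e.bijective,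
    by simp, by simp⟩⟩

theorem exists_mul_ne_mul (hk : IsEmpty (k ≃+* kᵐᵒᵖ)) : ∃ c m : k, c * m ≠ m * c := by
  by_contra! hcomm
  exact hk.false { MulOpposite.opAddEquiv with map_mul' := fun a b ↦ by simp [hcomm a b] }

end DivisionRing

end SidedGeometry

/-- If `k` admits no anti-automorphism, then any injective map of `k^n` (`n ≥ 2`)
taking left or right affine subspaces to left or right affine subspaces takes left
affine subspaces to left ones and right affine subspaces to right ones. -/
theorem stmt_19 [DivisionRing k] {n : ℕ} (hn : 2 ≤ n)
    (hanti : ¬ ∃ α : k → k, Function.Bijective α ∧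
      (∀ a b : k, α (a + b) = α a + α b) ∧ (∀ a b : k, α (a * b) = α b * α a))
    (f : (Fin n → k) → (Fin n → k)) (hinj : Function.Injective f)
    (hf : ∀ A : Set (Fin n → k), (IsLeftAff A ∨ IsRightAff A) →
      (IsLeftAff (f '' A) ∨ IsRightAff (f '' A))) :
    (∀ A : Set (Fin n → k), IsLeftAff A → IsLeftAff (f '' A)) ∧
    (∀ A : Set (Fin n → k), IsRightAff A → IsRightAff (f '' A)) := by
  have : Nontrivial (Fin n) := Fin.nontrivial_iff_two_le.mpr hn
  have hk : IsEmpty (k ≃+* kᵐᵒᵖ) := SidedGeometry.isEmpty_ringEquiv_mulOpposite hanti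
  have hk' : IsEmpty (kᵐᵒᵖ ≃+* k) := ⟨fun e ↦ hk.false e.symm⟩
  obtain ⟨c, m, hcm⟩ := SidedGeometry.exists_mul_ne_mul hk
  have hc : c • (1 : k) = MulOpposite.op c • (1 : k) := by simp
  have hleft := SidedGeometry.mapsSided_increment hinj hf
  have hright a := (hleft a).swap_source.swap_target
  constructor
  · exact fun A ↦ SidedGeometry.IsAffine.image
      (SidedGeometry.exists_submodule_eq_image_increment hleft hk hk' one_ne_zero hc hcm)
  · exact fun A ↦ SidedGeometry.IsAffine.image
      (SidedGeometry.exists_submodule_eq_image_increment hright hk' hk one_ne_zero hc.symm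
        hcm.symm)
end
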